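/- arXiv:0709.2334 — 6 statements merged into one kernel-verified Lean document; each statement's English description precedes it below -/
import Mathlib

section
/- Let k be a field and let H be a finite-dimensional Hopf algebra over k. Then H is a Frobenius algebra; that is, there exists a bilinear form φ : H × H → k which is non-degenerate (φ(x,H) ≠ 0 and φ(H,x) ≠ 0 for every nonzero x ∈ H) and associative (φ(xh, y) = φ(x, hy) for all x, y, h ∈ H). -/
universe u v

namespace LarsonSweedler

open Coalgebra HopfAlgebra TensorProduct

section
variable {k : Type u} [Field k] {H : Type v} [Ring H] [HopfAlgebra k H]

/-- `a ↦ ∑ g(a₂) a₁` -/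
noncomputable def D (g : H →ₗ[k] k) : H →ₗ[k] H :=
  (TensorProduct.rid k H).toLinearMap ∘ₗ g.lTensor H ∘ₗ comul

/-- `a ↦ ∑ g(a₁) a₂` -/
noncomputable def E (g : H →ₗ[k] k) : H →ₗ[k] H :=
  (TensorProduct.lid k H).toLinearMap ∘ₗ g.rTensor H ∘ₗ comul

lemma D_repr (g : H →ₗ[k] k) {a : H} {ι : Type*} (r : Repr k a ι) :
    D g a = ∑ i ∈ r.index, g (r.right i) • r.left i := by
  simp [D, ← r.eq]

lemma E_repr (g : H →ₗ[k] k) {a : H} {ι : Type*} (r : Repr k a ι) :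
    E g a = ∑ i ∈ r.index, g (r.left i) • r.right i := by
  simp [E, ← r.eq]

lemma D_mul (g : H →ₗ[k] k) {h w : H} {ι : Type*} (r : Repr k h ι) :
    D g (h * w) = ∑ i ∈ r.index, r.left i * D (g ∘ₗ LinearMap.mulLeft k (r.right i)) w := by
  rw [D_repr g (r.mul (ℛ k w))]
  simp [D_repr _ (ℛ k w), Finset.sum_product, Finset.mul_sum]

lemma E_mul (g : H →ₗ[k] k) {h w : H} {ι : Type*} (r : Repr k h ι) :
    E g (h * w) = ∑ i ∈ r.index, r.right i * E (g ∘ₗ LinearMap.mulLeft k (r.left i)) w := by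
  rw [E_repr g (r.mul (ℛ k w))]
  simp [E_repr _ (ℛ k w), Finset.sum_product, Finset.mul_sum]

lemma D_counit (w : H) : D (counit (R := k)) w = w := by
  simp [D]

lemma sw1 (T : H →ₗ[k] H) (h : H) :
    ∑ i ∈ (ℛ k h).index, ∑ j ∈ (ℛ k ((ℛ k h).left i)).index,
      (ℛ k ((ℛ k h).left i)).left j *
        T (antipode k ((ℛ k h).right i) * antipode k (antipode k ((ℛ k ((ℛ k h).left i)).right j)))
      = h * T 1 := by
  have := congr((LinearMap.mul' k H ∘ₗ TensorProduct.map LinearMap.id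
    (T ∘ₗ antipode k ∘ₗ LinearMap.mul' k H ∘ₗ (antipode k).rTensor H))
      $(sum_tmul_tmul_eq (ℛ k h) (fun i => ℛ k _) (fun i => ℛ k _)))
  simp only [map_sum, LinearMap.comp_apply, TensorProduct.map_tmul, LinearMap.mul'_apply,
    LinearMap.rTensor_tmul, LinearMap.id_apply, antipode_mul_antidistrib] at this
  rw [this]
  simp only [← antipode_mul_antidistrib, ← Finset.mul_sum, ← map_sum,
    sum_antipode_mul_eq_smul]
  simp only [map_smul, antipode_one, mul_smul_comm, ← smul_mul_assoc, ← Finset.sum_mul]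
  rw [← D_repr, D_counit]

lemma sw2 (T : H →ₗ[k] H) (h : H) :
    ∑ i ∈ (ℛ k h).index, ∑ j ∈ (ℛ k ((ℛ k h).right i)).index,
      (ℛ k ((ℛ k h).right i)).right j *
        T (antipode k ((ℛ k h).left i) * (ℛ k ((ℛ k h).right i)).left j)
      = h * T 1 := by
  have := congr((LinearMap.mul' k H ∘ₗ (TensorProduct.comm k H H).toLinearMap ∘ₗ
    (T ∘ₗ LinearMap.mul' k H ∘ₗ (antipode k).rTensor H).rTensor H ∘ₗ
      (TensorProduct.assoc k H H H).symm.toLinearMap)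
      $(sum_tmul_tmul_eq (ℛ k h) (fun i => ℛ k _) (fun i => ℛ k _)))
  simp only [map_sum, LinearMap.comp_apply, LinearEquiv.coe_coe, TensorProduct.assoc_symm_tmul,
    LinearMap.mul'_apply, TensorProduct.comm_tmul, LinearMap.rTensor_tmul] at this
  rw [← this]
  simp only [← Finset.mul_sum, ← map_sum, sum_antipode_mul_eq_smul]
  simp only [map_smul, mul_smul_comm, ← smul_mul_assoc, ← Finset.sum_mul]
  rw [sum_counit_smul]

/-- convolution of functionals -/
noncomputable def cv (f g : H →ₗ[k] k) : H →ₗ[k] k :=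
  (TensorProduct.lid k k).toLinearMap ∘ₗ TensorProduct.map f g ∘ₗ comul

lemma cv_repr (f g : H →ₗ[k] k) {a : H} {ι : Type*} (r : Repr k a ι) :
    cv f g a = ∑ i ∈ r.index, f (r.left i) * g (r.right i) := by
  simp [cv, ← r.eq]

lemma D_D (f g : H →ₗ[k] k) (w : H) : D f (D g w) = D (cv f g) w := by
  have := congr((TensorProduct.rid k H).toLinearMap
    ((((TensorProduct.lid k k).toLinearMap ∘ₗ TensorProduct.map f g).lTensor H)
      $(sum_tmul_tmul_eq (ℛ k w) (fun i => ℛ k _) (fun i => ℛ k _))))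
  simp only [map_sum, LinearMap.comp_apply, LinearEquiv.coe_coe, LinearMap.lTensor_tmul,
    TensorProduct.map_tmul, TensorProduct.lid_tmul, TensorProduct.rid_tmul, smul_eq_mul] at this
  rw [D_repr g (ℛ k w), map_sum, D_repr _ (ℛ k w)]
  simp only [map_smul]
  simp only [D_repr f (ℛ k _), cv_repr f g (ℛ k _), Finset.sum_smul, Finset.smul_sum,
    smul_smul]
  rw [← this]
  simp only [mul_comm]

variable [FiniteDimensional k H]

/-- the candidate left integral -/
noncomputable def tt (v : H) : H :=
  ∑ i, D ((Module.finBasis k H).coord i ∘ₗ LinearMap.mulRight k v ∘ₗ antipode k ∘ₗ antipode k)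
    (Module.finBasis k H i)

/-- `D` as a linear map in the functional -/
noncomputable def Dl (w : H) : (H →ₗ[k] k) →ₗ[k] H where
  toFun g := D g w
  map_add' f g := by simp [D_repr _ (ℛ k w), add_smul, Finset.sum_add_distrib]
  map_smul' c g := by simp [D_repr _ (ℛ k w), mul_smul, Finset.smul_sum]

/-- `E` as a linear map in the functional -/
noncomputable def El (w : H) : (H →ₗ[k] k) →ₗ[k] H where
  toFun g := E g w
  map_add' f g := by simp [E_repr _ (ℛ k w), add_smul, Finset.sum_add_distrib]
  map_smul' c g := by simp [E_repr _ (ℛ k w), mul_smul, Finset.smul_sum]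

lemma key1 (h w v : H) (f : H →ₗ[k] k) :
    ∑ i ∈ (ℛ k h).index, D (f ∘ₗ LinearMap.mulLeft k (antipode k ((ℛ k h).right i)) ∘ₗ
      LinearMap.mulRight k v ∘ₗ antipode k ∘ₗ antipode k) ((ℛ k h).left i * w) =
    h * D (f ∘ₗ LinearMap.mulRight k v ∘ₗ antipode k ∘ₗ antipode k) w := by
  let T : H →ₗ[k] H :=
    { toFun := fun y => D (f ∘ₗ LinearMap.mulLeft k y ∘ₗ
        LinearMap.mulRight k v ∘ₗ antipode k ∘ₗ antipode k) w
      map_add' := fun x y => by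
        simp [D_repr _ (ℛ k w), add_smul, Finset.sum_add_distrib, add_mul]
      map_smul' := fun c x => by
        simp [D_repr _ (ℛ k w), mul_smul, Finset.smul_sum] }
  have := sw1 T h
  have h1 : T 1 = D (f ∘ₗ LinearMap.mulRight k v ∘ₗ antipode k ∘ₗ antipode k) w := by
    simp [T, D_repr _ (ℛ k w)]
  rw [← h1, ← this]
  refine Finset.sum_congr rfl fun i _ => ?_
  rw [D_mul _ (ℛ k ((ℛ k h).left i))]
  refine Finset.sum_congr rfl fun j _ => ?_
  simp [T, D_repr _ (ℛ k w), antipode_mul_antidistrib, mul_assoc]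

/-- partial evaluation against the dual basis -/
lemma dual_basis_move (B : H →ₗ[k] (H →ₗ[k] k) →ₗ[k] H) (F : H →ₗ[k] H) :
    ∑ i, B (F (Module.finBasis k H i)) ((Module.finBasis k H).coord i) =
    ∑ i, B (Module.finBasis k H i) ((Module.finBasis k H).coord i ∘ₗ F) := by
  set b := Module.finBasis k H
  have e1 : ∀ i, F (b i) = ∑ j, b.coord j (F (b i)) • b j := fun i => by
    simpa using (b.sum_repr (F (b i))).symm
  have e2 : ∀ j, b.coord j ∘ₗ F = ∑ i, b.coord j (F (b i)) • b.coord i := fun j => by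
    apply b.ext
    intro l
    simp [Finsupp.single_apply]
  calc _ = ∑ i, B (∑ j, b.coord j (F (b i)) • b j) (b.coord i) := by simp_rw [← e1]
    _ = ∑ j, B (b j) (∑ i, b.coord j (F (b i)) • b.coord i) := by
      simp only [map_sum, map_smul, LinearMap.sum_apply, LinearMap.smul_apply]
      rw [Finset.sum_comm]
    _ = _ := by simp_rw [← e2]

lemma tt_integral (h v : H) : h * tt (k := k) v = counit (R := k) h • tt (k := k) v := by
  set b := Module.finBasis k H with hb
  have h2 : ∀ i, h * D (b.coord i ∘ₗ LinearMap.mulRight k v ∘ₗ antipode k ∘ₗ antipode k) (b i) = _ :=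
    fun i => (key1 h (b i) v (b.coord i)).symm
  unfold tt
  rw [Finset.mul_sum]
  rw [← hb]
  simp_rw [h2]
  rw [Finset.sum_comm]
  let B : H → H →ₗ[k] (H →ₗ[k] k) →ₗ[k] H := fun y => LinearMap.mk₂ k
    (fun w f => D (f ∘ₗ LinearMap.mulLeft k y ∘ₗ
      LinearMap.mulRight k v ∘ₗ antipode k ∘ₗ antipode k) w)
    (fun _ _ _ => map_add _ _ _) (fun _ _ _ => map_smul _ _ _)
    (fun w f g => by simp [D_repr _ (ℛ k w), add_smul, Finset.sum_add_distrib])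
    (fun c w f => by simp [D_repr _ (ℛ k w), mul_smul, Finset.smul_sum])
  have h3 : ∀ x y, ∑ i, D (b.coord i ∘ₗ LinearMap.mulLeft k y ∘ₗ
      LinearMap.mulRight k v ∘ₗ antipode k ∘ₗ antipode k) (x * b i) =
      ∑ i, D (b.coord i ∘ₗ LinearMap.mulLeft k (x * y) ∘ₗ
      LinearMap.mulRight k v ∘ₗ antipode k ∘ₗ antipode k) (b i) := by
    intro x y
    have := dual_basis_move (B y) (LinearMap.mulLeft k x)
    simp only [B, LinearMap.mk₂_apply, LinearMap.mulLeft_apply, LinearMap.comp_assoc, ← hb] at this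
    rw [this, LinearMap.mulLeft_mul]
    rfl
  simp_rw [h3]
  rw [Finset.sum_comm, Finset.smul_sum]
  refine Finset.sum_congr rfl fun i _ => ?_
  have h4 := sum_mul_antipode_eq_smul (R := k) (ℛ k h)
  simp only [D_repr _ (ℛ k (b i))]
  rw [Finset.sum_comm, Finset.smul_sum]
  refine Finset.sum_congr rfl fun j _ => ?_
  rw [← Finset.sum_smul, smul_smul]
  congr 1
  simp only [LinearMap.comp_apply, LinearMap.mulLeft_apply, ← map_sum, ← Finset.sum_mul, h4]
  simp

lemma tt_recover (v : H) :
    ∑ j, D ((Module.finBasis k H).coord j ∘ₗ antipode k) (tt (k := k) (Module.finBasis k H j * v))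
      = v := by
  set b := Module.finBasis k H with hb
  unfold tt
  simp only [map_sum, ← hb, D_D]
  rw [Finset.sum_comm]
  have h1 : ∀ i, ∑ j, D (cv (b.coord j ∘ₗ antipode k)
      (b.coord i ∘ₗ LinearMap.mulRight k (b j * v) ∘ₗ antipode k ∘ₗ antipode k)) (b i) =
      b.coord i v • b i := by
    intro i
    have h2 : ∑ j, cv (b.coord j ∘ₗ antipode k)
      (b.coord i ∘ₗ LinearMap.mulRight k (b j * v) ∘ₗ antipode k ∘ₗ antipode k) =
      b.coord i v • counit := by
      ext w
      simp only [LinearMap.sum_apply, cv_repr _ _ (ℛ k w), LinearMap.comp_apply,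
        LinearMap.mulRight_apply, LinearMap.smul_apply]
      rw [Finset.sum_comm]
      have h3 : ∀ x y : H, ∑ j, b.coord j (antipode k x) *
          b.coord i (antipode k (antipode k y) * (b j * v)) =
          b.coord i (antipode k (x * antipode k y) * v) := by
        intro x y
        rw [antipode_mul_antidistrib, mul_assoc]
        conv_rhs => rw [← b.sum_repr (antipode k x)]
        simp only [Finset.sum_mul, Finset.mul_sum, map_sum, smul_mul_assoc, mul_smul_comm,
          map_smul, smul_eq_mul, Module.Basis.coord_apply]
      simp_rw [h3]
      rw [← map_sum, ← Finset.sum_mul, ← map_sum, sum_mul_antipode_eq_smul]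
      simp [mul_comm]
    have := congr(Dl (b i) $h2)
    rw [map_sum, map_smul] at this
    refine this.trans ?_
    congr 1
    exact D_counit _
  simp_rw [h1]
  simpa using b.sum_repr v

lemma exists_integral [Nontrivial H] : ∃ t : H, t ≠ 0 ∧
    ∀ h : H, h * t = counit (R := k) h • t := by
  by_contra! hc
  have : ∀ v : H, tt (k := k) v = 0 := fun v => by
    by_contra hv
    obtain ⟨h, hh⟩ := hc _ hv
    exact hh (tt_integral h v)
  have h1 := tt_recover (k := k) (1 : H)
  simp [this] at h1

lemma E_antipode {t : H} (ht : ∀ h : H, h * t = counit (R := k) h • t) (g : H →ₗ[k] k) (h : H) :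
    E (g ∘ₗ LinearMap.mulLeft k (antipode k h)) t = h * E g t := by
  let T : H →ₗ[k] H :=
    { toFun := fun y => E (g ∘ₗ LinearMap.mulLeft k y) t
      map_add' := fun x y => by
        simp [E_repr _ (ℛ k t), add_smul, Finset.sum_add_distrib, add_mul]
      map_smul' := fun c x => by
        simp [E_repr _ (ℛ k t), mul_smul, Finset.smul_sum] }
  have h1 : T 1 = E g t := by simp [T, E_repr _ (ℛ k t)]
  have h0 := sw2 T h
  rw [h1] at h0
  rw [← h0]
  have h2 : ∀ i, ∑ j ∈ (ℛ k ((ℛ k h).right i)).index,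
      (ℛ k ((ℛ k h).right i)).right j *
        T (antipode k ((ℛ k h).left i) * (ℛ k ((ℛ k h).right i)).left j) =
      counit (R := k) ((ℛ k h).right i) • T (antipode k ((ℛ k h).left i)) := by
    intro i
    have := E_mul (g ∘ₗ LinearMap.mulLeft k (antipode k ((ℛ k h).left i))) (w := t)
      (ℛ k ((ℛ k h).right i))
    rw [ht, map_smul] at this
    refine Eq.trans ?_ this.symm
    simp only [T, LinearMap.coe_mk, AddHom.coe_mk, LinearMap.mulLeft_mul, LinearMap.comp_assoc]
  simp_rw [h2, ← map_smul, ← map_sum, ← D_repr, D_counit]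
  rfl

lemma exists_lam {t : H} (ht0 : t ≠ 0) (ht : ∀ h : H, h * t = counit (R := k) h • t) :
    ∃ l : H →ₗ[k] k, E l t = 1 := by
  obtain ⟨f, hf⟩ := Module.Projective.exists_dual_eq_one k ht0
  set b := Module.finBasis k H with hb
  refine ⟨∑ j, cv f (b.coord j ∘ₗ antipode k) ∘ₗ LinearMap.mulLeft k (antipode k (b j)), ?_⟩
  change El t _ = 1
  rw [map_sum]
  change ∑ j, E (cv f (b.coord j ∘ₗ antipode k) ∘ₗ LinearMap.mulLeft k (antipode k (b j))) t = 1
  simp_rw [E_antipode ht]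
  have h1 : ∀ x : H, ∑ j, cv f (b.coord j ∘ₗ antipode k) x • b j =
      ∑ i ∈ (ℛ k x).index, f ((ℛ k x).left i) • antipode k ((ℛ k x).right i) := by
    intro x
    simp only [cv_repr _ _ (ℛ k x), Finset.sum_smul]
    rw [Finset.sum_comm]
    refine Finset.sum_congr rfl fun i _ => ?_
    simp only [mul_smul, ← Finset.smul_sum, LinearMap.comp_apply, Module.Basis.coord_apply]
    rw [b.sum_repr]
  have h2 : ∑ j, b j * E (cv f (b.coord j ∘ₗ antipode k)) t =
      ∑ i ∈ (ℛ k t).index, (∑ j, cv f (b.coord j ∘ₗ antipode k) ((ℛ k t).left i) • b j) *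
        (ℛ k t).right i := by
    simp only [E_repr _ (ℛ k t), Finset.mul_sum, Finset.sum_mul, mul_smul_comm, smul_mul_assoc]
    rw [Finset.sum_comm]
  rw [h2]
  simp_rw [h1]
  have := congr((TensorProduct.lid k H).toLinearMap
    ((TensorProduct.map f (LinearMap.mul' k H ∘ₗ (antipode k).rTensor H))
      $(sum_tmul_tmul_eq (ℛ k t) (fun i => ℛ k _) (fun i => ℛ k _))))
  simp only [map_sum, LinearMap.comp_apply, LinearEquiv.coe_coe, LinearMap.rTensor_tmul,
    TensorProduct.map_tmul, TensorProduct.lid_tmul, LinearMap.mul'_apply] at this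
  simp only [Finset.sum_mul, smul_mul_assoc]
  rw [this]
  simp only [← Finset.smul_sum, sum_antipode_mul_eq_smul, smul_smul]
  rw [← Finset.sum_smul]
  have h5 : ∑ i ∈ (ℛ k t).index, f ((ℛ k t).left i) * counit (R := k) ((ℛ k t).right i) = f t := by
    conv_rhs => rw [← D_counit (k := k) t, D_repr _ (ℛ k t)]
    simp [mul_comm]
  rw [h5, hf, one_smul]

end

end LarsonSweedler

theorem finite_dimensional_hopf_algebra_is_frobenius
    (k : Type u) [Field k] (H : Type v) [Ring H] [HopfAlgebra k H]
    [FiniteDimensional k H] :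
    ∃ φ : H →ₗ[k] H →ₗ[k] k,
      (∀ x : H, x ≠ 0 → ∃ y : H, φ x y ≠ 0) ∧
      (∀ x : H, x ≠ 0 → ∃ y : H, φ y x ≠ 0) ∧
      (∀ x h y : H, φ (x * h) y = φ x (h * y)) := by
  rcases subsingleton_or_nontrivial H with hs | hn
  · exact ⟨0, fun x hx => (hx (Subsingleton.elim _ _)).elim,
      fun x hx => (hx (Subsingleton.elim _ _)).elim, by simp⟩
  obtain ⟨t, ht0, ht⟩ := LarsonSweedler.exists_integral (k := k) (H := H)
  obtain ⟨l, hl⟩ := LarsonSweedler.exists_lam ht0 ht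
  let φ : H →ₗ[k] H →ₗ[k] k := (LinearMap.mul k H).compr₂ l
  have key : ∀ h : H, φ (HopfAlgebra.antipode k h) = 0 → h = 0 := by
    intro h hh
    have h1 := LarsonSweedler.E_antipode ht l h
    have h2 : l ∘ₗ LinearMap.mulLeft k (HopfAlgebra.antipode k h) = 0 := hh
    rw [h2, hl, mul_one] at h1
    rw [← h1]
    simp [LarsonSweedler.E]
  have Sinj : Function.Injective (HopfAlgebra.antipode k (A := H)) := by
    rw [injective_iff_map_eq_zero]
    intro a ha
    exact key a (by rw [ha, map_zero])
  have Ssurj := LinearMap.injective_iff_surjective.mp Sinj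
  have phi_inj : Function.Injective φ := by
    rw [injective_iff_map_eq_zero]
    intro a ha
    obtain ⟨h, rfl⟩ := Ssurj a
    rw [key h ha, map_zero]
  have phi_surj : Function.Surjective φ :=
    (LinearMap.injective_iff_surjective_of_finrank_eq_finrank
      (Subspace.dual_finrank_eq (K := k) (V := H)).symm).mp phi_inj
  refine ⟨φ, ?_, ?_, ?_⟩
  · intro x hx
    by_contra! hc
    exact hx (phi_inj (by ext y; simp [hc y]))
  · intro x hx
    by_contra! hc
    apply hx
    rw [← Module.forall_dual_apply_eq_zero_iff k]
    intro f
    obtain ⟨y, rfl⟩ := phi_surj f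
    exact hc y
  · intro x h y
    simp [φ, mul_assoc]
end

section
/- Let k be a field and let H be a Hopf algebra over k whose underlying ring is artinian (as a left module over itself). Then H is finite-dimensional as a k-vector space. -/
/-!
STATEMENT 1 (Liu–Zhang):
A Hopf algebra over a field `k` whose underlying ring is artinian (as a left module
over itself) is finite-dimensional over `k`.
-/

universe u v

open scoped TensorProduct in
/-- If `R` is a finite dimensional right ideal not killed by the counit, `H` is
finite-dimensional. -/
theorem finiteDimensional_of_rightIdeal
    (k : Type u) [Field k] (H : Type v) [Ring H] [HopfAlgebra k H]
    (R : Submodule k H) (hfin : FiniteDimensional k R)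
    (hR : ∀ r ∈ R, ∀ h : H, r * h ∈ R)
    (e : H) (he : e ∈ R) (he1 : Coalgebra.counit (R := k) e = 1) :
    FiniteDimensional k H := by
  classical
  let T : (H →ₗ[k] k) → (H ⊗[k] H →ₗ[k] H) := fun φ =>
    (TensorProduct.rid k H).toLinearMap ∘ₗ φ.lTensor H
  have hT : ∀ φ a b, T φ (a ⊗ₜ b) = φ b • a := by
    intro φ a b; simp [T]
  let W : Submodule k H :=
    Submodule.span k {w | ∃ φ : H →ₗ[k] k, ∃ r ∈ R, w = T φ (Coalgebra.comul r)}
  -- key identity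
  have key : ∀ h : H, ∀ ρ : Coalgebra.Repr k h (H × H),
      ∑ i ∈ ρ.index, Coalgebra.comul (R := k) (ρ.left i) *
        ((1 : H) ⊗ₜ[k] HopfAlgebra.antipode k (ρ.right i)) = h ⊗ₜ[k] (1 : H) := by
    intro h ρ
    let f : (H ⊗[k] H) ⊗[k] H →ₗ[k] H ⊗[k] H :=
      (LinearMap.lTensor H (LinearMap.mul' k H ∘ₗ (HopfAlgebra.antipode k).lTensor H)) ∘ₗ
        (TensorProduct.assoc k H H H).toLinearMap
    have hf : ∀ (z : H ⊗[k] H) (c : H),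
        f (z ⊗ₜ c) = z * ((1 : H) ⊗ₜ[k] HopfAlgebra.antipode k c) := by
      intro z c
      induction z with
      | zero => simp
      | tmul a b => simp [f]
      | add x y hx hy => rw [TensorProduct.add_tmul, map_add, hx, hy, add_mul]
    have h1 : f (Coalgebra.comul.rTensor H (Coalgebra.comul (R := k) h)) = h ⊗ₜ[k] (1 : H) := by
      simp only [f, LinearMap.comp_apply, LinearEquiv.coe_coe, Coalgebra.coassoc_apply]
      rw [← LinearMap.comp_apply, ← LinearMap.lTensor_comp, LinearMap.comp_assoc,
        HopfAlgebra.mul_antipode_lTensor_comul, LinearMap.lTensor_comp, LinearMap.comp_apply,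
        Coalgebra.lTensor_counit_comul]
      simp
    rw [← h1, ← ρ.eq]
    simp [hf]
  have hWmul : ∀ w ∈ W, ∀ h : H, w * h ∈ W := by
    intro w hw h
    induction hw using Submodule.span_induction with
    | zero => simp
    | add x y _ _ hx hy => rw [add_mul]; exact W.add_mem hx hy
    | smul c x _ hx => rw [smul_mul_assoc]; exact W.smul_mem c hx
    | mem w hw =>
      obtain ⟨φ, r, hr, rfl⟩ := hw
      let ρ := Coalgebra.Repr.arbitrary k h
      have e1 : ∀ z : H ⊗[k] H, T φ z * h = T φ (z * (h ⊗ₜ[k] (1 : H))) := by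
        intro z
        induction z with
        | zero => simp
        | tmul a b => simp [hT]
        | add x y hx hy => simp only [map_add, add_mul, hx, hy]
      have e2 : ∀ (s : H) (z : H ⊗[k] H), T φ (z * ((1 : H) ⊗ₜ[k] s)) =
          T (φ ∘ₗ LinearMap.mulRight k s) z := by
        intro s z
        induction z with
        | zero => simp
        | tmul a b => simp [hT]
        | add x y hx hy => simp only [map_add, add_mul, hx, hy]
      rw [e1, ← key h ρ, Finset.mul_sum, map_sum]
      refine W.sum_mem fun i _ => ?_
      rw [← mul_assoc, ← Bialgebra.comul_mul, e2]
      exact Submodule.subset_span ⟨_, _, hR r hr _, rfl⟩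
  -- every comul r is in W ⊗ H: use first components
  have hmem : ∀ r ∈ R, ∀ z : H →ₗ[k] H,
      LinearMap.mul' k H (z.lTensor H (Coalgebra.comul (R := k) r)) ∈ W := by
    intro r hr z
    let b := Module.Basis.ofVectorSpace k H
    have gen : ∀ t : H ⊗[k] H, (∀ φ : H →ₗ[k] k, T φ t ∈ W) →
        LinearMap.mul' k H (z.lTensor H t) ∈ W := by
      intro t ht
      obtain ⟨c, rfl⟩ := TensorProduct.eq_repr_basis_right b t
      have hc : ∀ j, c j ∈ W := by
        intro j
        by_cases h0 : c j = 0
        · rw [h0]; exact W.zero_mem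
        have := ht (b.coord j)
        rw [Finsupp.sum, map_sum] at this
        simpa [hT, Finsupp.single_apply, h0] using this
      rw [Finsupp.sum, map_sum, map_sum]
      refine W.sum_mem fun i _ => ?_
      simpa using hWmul _ (hc i) _
    exact gen _ fun φ => Submodule.subset_span ⟨φ, r, hr, rfl⟩
  have h1W : (1 : H) ∈ W := by
    have := hmem e he (HopfAlgebra.antipode k)
    rwa [HopfAlgebra.mul_antipode_lTensor_comul_apply, he1, map_one] at this
  have hWtop : W = ⊤ := by
    rw [eq_top_iff]; intro h _
    simpa using hWmul 1 h1W h
  have hWfin : FiniteDimensional k W := by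
    obtain ⟨s, hs⟩ := (Module.Finite.iff_fg).1 hfin
    obtain ⟨M', hM', hsub⟩ := TensorProduct.exists_finite_submodule_left_of_setFinite
      (R := k) ((Coalgebra.comul (R := k) (A := H)) '' (s : Set H)) (s.finite_toSet.image _)
    have hle : R ≤ Submodule.comap (Coalgebra.comul (R := k) (A := H))
        (LinearMap.range (M'.subtype.rTensor H)) := by
      rw [← hs, Submodule.span_le]
      intro x hx
      exact hsub ⟨x, hx, rfl⟩
    refine Submodule.finiteDimensional_of_le (S₂ := M') ?_
    rw [Submodule.span_le]
    rintro _ ⟨φ, r, hr, rfl⟩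
    obtain ⟨z, hz⟩ := hle hr
    rw [← hz]
    clear hz
    induction z with
    | zero => simp
    | tmul a b =>
      rw [LinearMap.rTensor_tmul, hT]
      exact M'.smul_mem _ a.2
    | add x y hx hy =>
      rw [map_add, map_add]
      exact M'.add_mem hx hy
  rw [hWtop] at hWfin
  exact Module.finite_def.2 ((Module.Finite.iff_fg).1 hWfin)

theorem exists_good (k : Type u) [Field k] (H : Type v) [Ring H] [HopfAlgebra k H]
    [IsArtinianRing H] : ∃ e : H, Coalgebra.counit (R := k) e = 1 ∧
      ∃ F : Submodule k H, FiniteDimensional k F ∧ ∀ x : H, e * x ∈ F := by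
  let ε := Bialgebra.counitAlgHom k H
  -- a left ideal minimal among those not killed by the counit
  obtain ⟨L, ⟨e₀, he₀L, he₀⟩, hmin⟩ := WellFounded.has_min
    (wellFounded_lt : WellFounded ((· < ·) : Submodule H H → Submodule H H → Prop))
    {L | ∃ x ∈ L, ε x ≠ 0} ⟨⊤, 1, trivial, by simp⟩
  replace hmin : ∀ L' : Submodule H H, L' ≤ L → (∃ x ∈ L, x ∉ L') → ∀ x ∈ L', ε x = 0 := by
    intro L' hle ⟨y, hyL, hyL'⟩ x hx
    by_contra hne
    exact hmin L' ⟨x, hx, hne⟩ (lt_of_le_of_ne hle fun h => hyL' (h ▸ hyL))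
  obtain ⟨e₁, he₁L, he₁⟩ : ∃ e ∈ L, ε e = 1 := by
    refine ⟨algebraMap k H (ε e₀)⁻¹ * e₀, L.smul_mem _ he₀L, ?_⟩
    rw [map_mul, AlgHom.commutes]
    exact inv_mul_cancel₀ he₀
  have hnoeth : WellFoundedGT (Submodule H H) := inferInstance
  obtain ⟨I, ⟨e, he, F, hF, heF⟩, hmax⟩ := WellFounded.has_min hnoeth.wf
    {I : Submodule H H | ∃ e : H, ε e = 1 ∧
      ∃ F : Submodule k H, FiniteDimensional k F ∧ ∀ x ∈ I, e * x ∈ F}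
    ⟨⊥, 1, by simp, ⊥, inferInstance, by simp⟩
  by_cases hI : I = ⊤
  · exact ⟨e, he, F, hF, fun x => heF x (by simp [hI])⟩
  exfalso
  obtain ⟨J, hIJ, hJmin⟩ := WellFounded.has_min
    (wellFounded_lt : WellFounded ((· < ·) : Submodule H H → Submodule H H → Prop))
    {J | I < J} ⟨⊤, lt_top_iff_ne_top.2 hI⟩
  change I < J at hIJ
  refine hmax J ?_ hIJ
  by_cases hL : ∀ m ∈ J, ∀ l ∈ L, l * m ∈ I
  · refine ⟨e * e₁, by rw [map_mul, he, he₁, one_mul], F, hF, fun x hx => ?_⟩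
    rw [mul_assoc]
    exact heF _ (hL x hx _ he₁L)
  push Not at hL
  obtain ⟨m, hm, l, hl, hlm⟩ := hL
  have hK : ∀ x ∈ L, x * m ∈ I → ε x = 0 := by
    intro x hx hxm
    exact hmin (L ⊓ I.comap (LinearMap.toSpanSingleton H H m)) inf_le_left
      ⟨l, hl, fun h => hlm (by simpa using h.2)⟩ x ⟨hx, by simpa using hxm⟩
  have hcov : ∀ J' : Submodule H H, J' ≤ J → I ≤ J' → (∃ x ∈ J', x ∉ I) → J' = J := by
    intro J' h1 h2 ⟨x, hx, hxI⟩
    by_contra hne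
    exact hJmin J' (lt_of_le_of_ne h2 fun h => hxI (h ▸ hx)) (lt_of_le_of_ne h1 hne)
  have hx0 : ∀ x ∈ L, ε x = 0 → x * m ∈ I := by
    by_contra hcon
    push Not at hcon
    obtain ⟨x, hx, hx0, hxI⟩ := hcon
    have : I ⊔ (H ∙ (x * m)) = J := hcov _
      (sup_le hIJ.le (by
        rw [Submodule.span_singleton_le_iff_mem]; exact J.smul_mem x hm)) le_sup_left
      ⟨x * m, Submodule.mem_sup_right (Submodule.mem_span_singleton_self _), hxI⟩
    have h2 : e₁ * m ∈ I ⊔ (H ∙ (x * m)) := this ▸ J.smul_mem e₁ hm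
    obtain ⟨i, hi, j, hj, hij⟩ := Submodule.mem_sup.1 h2
    obtain ⟨a, rfl⟩ := Submodule.mem_span_singleton.1 hj
    have h3 := hK (e₁ - a * x) (L.sub_mem he₁L (L.smul_mem a hx)) (by
      have : (e₁ - a * x) * m = i := by
        rw [sub_mul, ← hij, smul_eq_mul, mul_assoc]; abel
      rwa [this])
    rw [map_sub, map_mul, hx0, he₁] at h3
    simp at h3
  have hJ : I ⊔ (H ∙ (e₁ * m)) = J := hcov _
    (sup_le hIJ.le (by
      rw [Submodule.span_singleton_le_iff_mem]; exact J.smul_mem e₁ hm)) le_sup_left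
    ⟨e₁ * m, Submodule.mem_sup_right (Submodule.mem_span_singleton_self _), fun h => by
      have := hK e₁ he₁L h
      rw [he₁] at this; exact one_ne_zero this⟩
  refine ⟨e, he, F ⊔ (k ∙ (e * (e₁ * m))), inferInstance, fun x hx => ?_⟩
  rw [← hJ] at hx
  obtain ⟨i, hi, j, hj, rfl⟩ := Submodule.mem_sup.1 hx
  obtain ⟨a, rfl⟩ := Submodule.mem_span_singleton.1 hj
  have h4 : (a * e₁ - algebraMap k H (ε a) * e₁) * m ∈ I := by
    refine hx0 _ (L.sub_mem (L.smul_mem _ he₁L) (L.smul_mem _ he₁L)) ?_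
    rw [map_sub, map_mul, map_mul, AlgHom.commutes]
    simp
  have h5 : e * (i + a • (e₁ * m)) =
      e * (i + (a * e₁ - algebraMap k H (ε a) * e₁) * m) + ε a • (e * (e₁ * m)) := by
    rw [← mul_smul_comm (ε a) e, Algebra.smul_def, smul_eq_mul]
    noncomm_ring
  rw [h5]
  exact Submodule.add_mem_sup (heF _ (I.add_mem hi h4))
    (Submodule.smul_mem _ _ (Submodule.mem_span_singleton_self _))

theorem artinian_hopf_algebra_is_finite_dimensional
    (k : Type u) [Field k] (H : Type v) [Ring H] [HopfAlgebra k H]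
    [IsArtinianRing H] :
    FiniteDimensional k H := by
  obtain ⟨e, he, F, hF, heF⟩ := exists_good k H
  refine finiteDimensional_of_rightIdeal k H (LinearMap.range (LinearMap.mulLeft k e)) ?_ ?_ e
    ⟨1, by simp⟩ he
  · refine Submodule.finiteDimensional_of_le (S₂ := F) ?_
    rintro _ ⟨x, rfl⟩
    exact heF x
  · rintro _ ⟨x, rfl⟩ h
    exact ⟨x * h, by simp [mul_assoc]⟩
end

section
/- Let k be a field and let T be a group such that the group algebra kT is a noetherian ring. Then T satisfies the ascending chain condition on subgroups. -/
/-!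
STATEMENT 3:
If the group algebra `kT` is a noetherian ring, then the group `T` satisfies the
ascending chain condition on subgroups.
-/

universe u v

/-- The left ideal generated by all `h - 1`, `h ∈ H`. -/
noncomputable def augIdeal (k : Type u) [Field k] (T : Type v) [Group T] (H : Subgroup T) :
    Ideal (MonoidAlgebra k T) :=
  Ideal.span ((fun h : T => MonoidAlgebra.single h (1 : k) - 1) '' (H : Set T))

lemma augIdeal_mono (k : Type u) [Field k] (T : Type v) [Group T] {H K : Subgroup T}
    (h : H ≤ K) : augIdeal k T H ≤ augIdeal k T K :=
  Ideal.span_mono (Set.image_mono h)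

lemma augIdeal_map (k : Type u) [Field k] (T : Type v) [Group T] (H : Subgroup T)
    (x : MonoidAlgebra k T) (hx : x ∈ augIdeal k T H) :
    ∀ y : MonoidAlgebra k T,
      Finsupp.mapDomain (QuotientGroup.mk : T → T ⧸ H) (y * x).coeff = 0 := by
  unfold augIdeal Ideal.span at hx
  induction hx using Submodule.span_induction with
  | mem x hx =>
    obtain ⟨h, hh, rfl⟩ := hx
    intro y
    induction y using MonoidAlgebra.induction_linear with
    | zero => simp
    | add a b ha hb =>
      rw [add_mul, MonoidAlgebra.coeff_add, Finsupp.mapDomain_add, ha, hb, add_zero]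
    | single g r =>
      have e : (QuotientGroup.mk (g * h) : T ⧸ H) = QuotientGroup.mk g := by
        rw [QuotientGroup.eq]; simpa using hh
      have e2 : (MonoidAlgebra.single g r * (MonoidAlgebra.single h (1 : k) - 1)).coeff +
          Finsupp.single g r = Finsupp.single (g * h) r := by
        rw [mul_sub, MonoidAlgebra.single_mul_single, mul_one, mul_one, MonoidAlgebra.coeff_sub]
        simp
      have e3 := congrArg (Finsupp.mapDomain (QuotientGroup.mk : T → T ⧸ H)) e2
      rw [Finsupp.mapDomain_add, Finsupp.mapDomain_single, Finsupp.mapDomain_single, e] at e3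
      simpa using e3
  | zero => simp
  | add a b _ _ ha hb =>
    intro y
    rw [mul_add, MonoidAlgebra.coeff_add, Finsupp.mapDomain_add, ha, hb, add_zero]
  | smul r a _ ha =>
    intro y
    rw [smul_eq_mul, ← mul_assoc]
    exact ha _

lemma mem_of_mem_augIdeal (k : Type u) [Field k] (T : Type v) [Group T] (H : Subgroup T)
    (g : T) (hx : MonoidAlgebra.single g (1 : k) - 1 ∈ augIdeal k T H) : g ∈ H := by
  have h1 := augIdeal_map k T H _ hx 1
  have e2 : (1 * (MonoidAlgebra.single g (1 : k) - 1)).coeff +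
      Finsupp.single 1 1 = Finsupp.single g 1 := by
    rw [one_mul, MonoidAlgebra.coeff_sub, MonoidAlgebra.one_def]
    simp
  have e3 := congrArg (Finsupp.mapDomain (QuotientGroup.mk : T → T ⧸ H)) e2
  rw [Finsupp.mapDomain_add, h1, Finsupp.mapDomain_single, Finsupp.mapDomain_single, zero_add] at e3
  have e4 := (Finsupp.single_left_inj (one_ne_zero)).1 e3
  rw [QuotientGroup.eq] at e4
  simpa using e4

theorem acc_subgroups_of_noetherian_group_algebra
    (k : Type u) [Field k] (T : Type v) [Group T]
    (h₁ : IsNoetherianRing (MonoidAlgebra k T))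
    (h₂ : IsNoetherianRing (MonoidAlgebra k T)ᵐᵒᵖ) :
    ∀ f : ℕ →o Subgroup T, ∃ n : ℕ, ∀ m : ℕ, n ≤ m → f m = f n := by
  intro f
  obtain ⟨n, hn⟩ := monotone_stabilizes_iff_noetherian.2 h₁
    ⟨fun i => augIdeal k T (f i), fun i j hij => augIdeal_mono k T (f.monotone hij)⟩
  refine ⟨n, fun m hm => le_antisymm (fun g hg => ?_) (f.monotone hm)⟩
  apply mem_of_mem_augIdeal k
  have e : augIdeal k T (f n) = augIdeal k T (f m) := hn m hm
  rw [e]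
  exact Ideal.subset_span ⟨g, hg, rfl⟩
end

section
/- (Molnar) Let k be a field and let H be a commutative Hopf algebra over k. Then H is affine (finitely generated as a k-algebra) if and only if H is noetherian. -/
universe u v

open TensorProduct Coalgebra WithConv


section
variable {k : Type*} [Field k] {H : Type*} [CommRing H] [HopfAlgebra k H]

lemma conv_inv_right {R : Type*} [CommRing R] [Algebra k R] (x : H →ₐ[k] R) :
    toConv x.toLinearMap * toConv (x.toLinearMap ∘ₗ HopfAlgebra.antipode k) = 1 := by
  have h := LinearMap.algHom_comp_convMul_distrib x (toConv (LinearMap.id : H →ₗ[k] H))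
    (toConv (HopfAlgebra.antipode k))
  rw [LinearMap.id_mul_antipode] at h
  apply WithConv.ofConv_injective
  refine Eq.trans h.symm ?_
  ext; simp

lemma conv_inv_left {R : Type*} [CommRing R] [Algebra k R] (x : H →ₐ[k] R) :
    toConv (x.toLinearMap ∘ₗ HopfAlgebra.antipode k) * toConv x.toLinearMap = 1 := by
  have h := LinearMap.algHom_comp_convMul_distrib x 
    (toConv (HopfAlgebra.antipode k)) (toConv (LinearMap.id : H →ₗ[k] H))
  rw [LinearMap.antipode_mul_id] at h
  apply WithConv.ofConv_injective
  refine Eq.trans h.symm ?_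
  ext; simp

lemma anti_anti (h : H) : HopfAlgebra.antipode k (HopfAlgebra.antipode k h) = h := by
  have h1 := conv_inv_right (HopfAlgebra.antipodeAlgHom k H)
  have h2 := LinearMap.id_mul_antipode (R := k) (C := H)
  have := left_inv_eq_right_inv h2 h1
  exact (congrArg (fun f => f.ofConv h) this).symm

abbrev i1 : H →ₐ[k] H ⊗[k] H := Algebra.TensorProduct.includeLeft
abbrev i2 : H →ₐ[k] H ⊗[k] H := Algebra.TensorProduct.includeRight

lemma conv_comul : toConv (i1 (k := k) (H := H)).toLinearMap * toConv i2.toLinearMap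
    = toConv (comul : H →ₗ[k] H ⊗[k] H) := by
  apply WithConv.ofConv_injective
  rw [LinearMap.convMul_def]
  have : LinearMap.mul' k (H ⊗[k] H) ∘ₗ TensorProduct.map (i1 (k := k) (H := H)).toLinearMap
      i2.toLinearMap = LinearMap.id := by
    ext; simp
  simp only
  rw [← LinearMap.comp_assoc, this, LinearMap.id_comp]

lemma conv_i2 : toConv (i2 (k := k) (H := H)).toLinearMap =
    toConv ((i1 (k := k) (H := H)).toLinearMap ∘ₗ HopfAlgebra.antipode k) *
      toConv (comul : H →ₗ[k] H ⊗[k] H) := by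
  rw [← conv_comul, ← mul_assoc, conv_inv_left, one_mul]

lemma comul_anti : toConv ((comul : H →ₗ[k] H ⊗[k] H) ∘ₗ HopfAlgebra.antipode k) =
    toConv ((i2 (k := k) (H := H)).toLinearMap ∘ₗ HopfAlgebra.antipode k) *
    toConv ((i1 (k := k) (H := H)).toLinearMap ∘ₗ HopfAlgebra.antipode k) := by
  have h1 := conv_inv_left (Bialgebra.comulAlgHom k H)
  refine left_inv_eq_right_inv h1 ?_
  change toConv (comul : H →ₗ[k] H ⊗[k] H) * _ = 1
  rw [← conv_comul, mul_assoc, ← mul_assoc (toConv i2.toLinearMap), conv_inv_right, one_mul,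
    conv_inv_right]

noncomputable def lf {M : Type*} [AddCommGroup M] [Module k M] (f : H →ₗ[k] k) :
    H ⊗[k] M →ₗ[k] M := (TensorProduct.lid k M).toLinearMap ∘ₗ f.rTensor M
noncomputable def rf {M : Type*} [AddCommGroup M] [Module k M] (f : H →ₗ[k] k) :
    M ⊗[k] H →ₗ[k] M := (TensorProduct.rid k M).toLinearMap ∘ₗ f.lTensor M

@[simp] lemma lf_tmul {M : Type*} [AddCommGroup M] [Module k M] (f : H →ₗ[k] k) (h : H) (m : M) :
    lf f (h ⊗ₜ m) = f h • m := by simp [lf]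
@[simp] lemma rf_tmul {M : Type*} [AddCommGroup M] [Module k M] (f : H →ₗ[k] k) (h : H) (m : M) :
    rf f (m ⊗ₜ h) = f h • m := by simp [rf]

noncomputable abbrev Lf (f : H →ₗ[k] k) : H →ₗ[k] H := lf f ∘ₗ comul
noncomputable abbrev Rf (f : H →ₗ[k] k) : H →ₗ[k] H := rf f ∘ₗ comul

lemma Lf_counit (h : H) : Lf (counit (R := k)) h = h := by simp [lf]
lemma Rf_counit (h : H) : Rf (counit (R := k)) h = h := by simp [rf]

lemma comul_lf (f : H →ₗ[k] k) (w : H ⊗[k] H) : comul (lf f w) = lf f (comul.lTensor H w) := by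
  induction w with
  | zero => simp
  | add x y hx hy => simp [hx, hy]
  | tmul x y => simp

lemma comul_rf (f : H →ₗ[k] k) (w : H ⊗[k] H) : comul (rf f w) = rf f (comul.rTensor H w) := by
  induction w with
  | zero => simp
  | add x y hx hy => simp [hx, hy]
  | tmul x y => simp

lemma Lf_Lf (f f' : H →ₗ[k] k) (h : H) : Lf f' (Lf f h) = Lf (f' ∘ₗ Lf f) h := by
  simp only [LinearMap.comp_apply, comul_lf]
  rw [← coassoc_apply]
  generalize comul (R := k) h = w
  induction w with
  | zero => simp
  | add x y hx hy => simp only [map_add, hx, hy]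
  | tmul x y =>
    simp only [LinearMap.rTensor_tmul, lf_tmul, LinearMap.comp_apply]
    generalize comul (R := k) x = w
    induction w with
    | zero => simp
    | add x y hx hy => simp only [map_add, hx, hy, add_tmul, add_smul]
    | tmul x y => simp [smul_smul]

lemma Rf_Rf (f f' : H →ₗ[k] k) (h : H) : Rf f' (Rf f h) = Rf (f' ∘ₗ Rf f) h := by
  simp only [LinearMap.comp_apply, comul_rf]
  rw [← coassoc_symm_apply]
  generalize comul (R := k) h = w
  induction w with
  | zero => simp
  | add x y hx hy => simp only [map_add, hx, hy]
  | tmul x y =>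
    simp only [LinearMap.lTensor_tmul, rf_tmul, LinearMap.comp_apply]
    generalize comul (R := k) y = w
    induction w with
    | zero => simp
    | add x y hx hy => simp only [map_add, hx, hy, tmul_add, add_smul]
    | tmul x y => simp [smul_smul]

lemma Lf_Rf (f g : H →ₗ[k] k) (h : H) : Lf f (Rf g h) = Rf g (Lf f h) := by
  simp only [LinearMap.comp_apply, comul_rf, comul_lf]
  rw [← coassoc_apply]
  generalize (comul (R := k)).rTensor H (comul (R := k) h) = w
  induction w with
  | zero => simp
  | add x y hx hy => simp only [map_add, hx, hy]
  | tmul x y =>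
    induction x with
    | zero => simp
    | add x y hx hy => simp only [map_add, hx, hy, add_tmul]
    | tmul x z => simp [smul_smul, mul_comm]

abbrev T (P Q : Submodule k H) : Submodule k (H ⊗[k] H) :=
  Submodule.map₂ (TensorProduct.mk k H H) P Q

lemma sep_l {w w' : H ⊗[k] H} (h : ∀ f : H →ₗ[k] k, lf f w = lf f w') : w = w' := by
  classical
  let b := Module.Basis.ofVectorSpace k H
  apply (TensorProduct.equivFinsuppOfBasisLeft (N := H) b).injective
  ext i
  rw [TensorProduct.equivFinsuppOfBasisLeft_apply, TensorProduct.equivFinsuppOfBasisLeft_apply]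
  exact h (b.coord i)

lemma sep_r {w w' : H ⊗[k] H} (h : ∀ f : H →ₗ[k] k, rf f w = rf f w') : w = w' := by
  classical
  let b := Module.Basis.ofVectorSpace k H
  apply (TensorProduct.equivFinsuppOfBasisRight (M := H) b).injective
  ext i
  rw [TensorProduct.equivFinsuppOfBasisRight_apply, TensorProduct.equivFinsuppOfBasisRight_apply]
  exact h (b.coord i)

lemma crit {P Q : Submodule k H} {w : H ⊗[k] H} (hl : ∀ f, lf f w ∈ Q) (hr : ∀ f, rf f w ∈ P) :
    w ∈ T P Q := by
  obtain ⟨p, hp⟩ := P.subtype.exists_leftInverse_of_injective P.ker_subtype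
  obtain ⟨q, hq⟩ := Q.subtype.exists_leftInverse_of_injective Q.ker_subtype
  have h1 : (Q.subtype ∘ₗ q).lTensor H w = w := by
    refine sep_l fun f => ?_
    have : lf f ((Q.subtype ∘ₗ q).lTensor H w) = (Q.subtype ∘ₗ q) (lf f w) := by
      generalize w = w
      induction w with
      | zero => simp
      | add x y hx hy => simp only [map_add, hx, hy]
      | tmul x y => simp
    rw [this]
    exact congrArg Subtype.val (LinearMap.congr_fun hq ⟨_, hl f⟩)
  have h2 : (P.subtype ∘ₗ p).rTensor H w = w := by
    refine sep_r fun f => ?_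
    have : rf f ((P.subtype ∘ₗ p).rTensor H w) = (P.subtype ∘ₗ p) (rf f w) := by
      generalize w = w
      induction w with
      | zero => simp
      | add x y hx hy => simp only [map_add, hx, hy]
      | tmul x y => simp
    rw [this]
    exact congrArg Subtype.val (LinearMap.congr_fun hp ⟨_, hr f⟩)
  rw [← h2, ← h1]
  generalize w = w
  induction w with
  | zero => simp
  | add x y hx hy => simp only [map_add]; exact add_mem hx hy
  | tmul x y => exact Submodule.apply_mem_map₂ _ (p x).2 (q y).2

lemma T_lf {P Q : Submodule k H} {w : H ⊗[k] H} (h : w ∈ T P Q) (f : H →ₗ[k] k) : lf f w ∈ Q := by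
  have : T P Q ≤ Q.comap (lf f) := Submodule.map₂_le.2 fun m _ n hn => by
    simpa using Q.smul_mem _ hn
  exact this h

lemma T_rf {P Q : Submodule k H} {w : H ⊗[k] H} (h : w ∈ T P Q) (f : H →ₗ[k] k) : rf f w ∈ P := by
  have : T P Q ≤ P.comap (rf f) := Submodule.map₂_le.2 fun m hm n hn => by
    simpa using P.smul_mem _ hm
  exact this h

lemma T_mono {P Q P' Q' : Submodule k H} (h : P ≤ P') (h' : Q ≤ Q') : T P Q ≤ T P' Q' :=
  Submodule.map₂_le_map₂ h h'

lemma fin_one (h : H) : ∃ C : Submodule k H, C.FG ∧ h ∈ C ∧ ∀ c ∈ C, comul c ∈ T C C := by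
  let C : Submodule k H := Submodule.span k (Set.range fun x : (H →ₗ[k] k) × (H →ₗ[k] k) =>
    Rf x.2 (Lf x.1 h))
  refine ⟨C, ?_, ?_, ?_⟩
  · have key : ∀ t : H ⊗[k] (H ⊗[k] H), ∃ P : Submodule k H, P.FG ∧
        ∀ f g : H →ₗ[k] k, rf g (lf f t) ∈ P := by
      intro t
      induction t with
      | zero => exact ⟨⊥, Submodule.fg_bot, by simp⟩
      | add x y hx hy =>
        obtain ⟨P, hP, hP'⟩ := hx
        obtain ⟨Q, hQ, hQ'⟩ := hy
        refine ⟨P ⊔ Q, hP.sup hQ, fun f g => ?_⟩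
        simp only [map_add]
        exact add_mem (Submodule.mem_sup_left (hP' f g)) (Submodule.mem_sup_right (hQ' f g))
      | tmul x y =>
        induction y with
        | zero => exact ⟨⊥, Submodule.fg_bot, by simp⟩
        | add y z hx hy =>
          obtain ⟨P, hP, hP'⟩ := hx
          obtain ⟨Q, hQ, hQ'⟩ := hy
          refine ⟨P ⊔ Q, hP.sup hQ, fun f g => ?_⟩
          simp only [map_add, tmul_add]
          exact add_mem (Submodule.mem_sup_left (hP' f g)) (Submodule.mem_sup_right (hQ' f g))
        | tmul y z =>
          refine ⟨Submodule.span k {y}, Submodule.fg_span_singleton _, fun f g => ?_⟩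
          simp only [lf_tmul, map_smul, rf_tmul]
          exact Submodule.smul_mem _ _ (Submodule.smul_mem _ _ (Submodule.mem_span_singleton_self y))
    obtain ⟨P, hP, hP'⟩ := key (comul.lTensor H (comul h))
    have hle : C ≤ P := by
      refine Submodule.span_le.2 ?_
      rintro _ ⟨⟨f, g⟩, rfl⟩
      have := hP' f g
      rw [← comul_lf] at this
      exact this
    have : FiniteDimensional k P := Module.Finite.iff_fg.2 hP
    have := Submodule.finiteDimensional_of_le hle
    exact Module.Finite.iff_fg.1 this
  · refine Submodule.subset_span ⟨(counit, counit), ?_⟩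
    simp only [Lf_counit, Rf_counit]
  · intro c hc
    refine crit (fun f => ?_) (fun f => ?_)
    · have : C ≤ C.comap (Lf f) := by
        refine Submodule.span_le.2 ?_
        rintro _ ⟨⟨f', g⟩, rfl⟩
        refine Submodule.subset_span ⟨(f ∘ₗ Lf f', g), ?_⟩
        simp only [Lf_Rf, Lf_Lf]
      exact this hc
    · have : C ≤ C.comap (Rf f) := by
        refine Submodule.span_le.2 ?_
        rintro _ ⟨⟨f', g⟩, rfl⟩
        refine Submodule.subset_span ⟨(f', f ∘ₗ Rf g), ?_⟩
        simp only [Rf_Rf]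
      exact this hc

lemma fin_many (s : Finset H) : ∃ C : Submodule k H, C.FG ∧ (s : Set H) ⊆ C ∧
    ∀ c ∈ C, comul c ∈ T C C := by
  classical
  induction s using Finset.induction_on with
  | empty => exact ⟨⊥, Submodule.fg_bot, by simp, by simp⟩
  | insert a s _ ih =>
    obtain ⟨C, h1, h2, h3⟩ := ih
    obtain ⟨D, g1, g2, g3⟩ := fin_one (k := k) a
    refine ⟨C ⊔ D, h1.sup g1, ?_, ?_⟩
    · intro x hx
      rcases Finset.mem_insert.1 hx with rfl | hx
      · exact Submodule.mem_sup_right g2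
      · exact Submodule.mem_sup_left (h2 hx)
    · intro c hc
      obtain ⟨y, hy, z, hz, rfl⟩ := Submodule.mem_sup.1 hc
      rw [map_add]
      exact add_mem (T_mono le_sup_left le_sup_left (h3 y hy))
        (T_mono le_sup_right le_sup_right (g3 z hz))
end


lemma aux_nil {A : Type*} [CommRing A] [IsNoetherianRing A] (p : Ideal A) [p.IsPrime]
    (hp : p ∈ minimalPrimes A) :
    IsNilpotent (IsLocalRing.maximalIdeal (Localization.AtPrime p)) := by
  have : IsNoetherianRing (Localization.AtPrime p) :=
    IsLocalization.isNoetherianRing p.primeCompl _ inferInstance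
  rw [Ideal.FG.isNilpotent_iff_le_nilradical (IsNoetherian.noetherian _)]
  have hs := IsLocalization.subsingleton_primeSpectrum_of_mem_minimalPrimes p hp
    (Localization.AtPrime p)
  rw [nilradical_eq_sInf]
  refine le_sInf fun J hJ => ?_
  have hJ' : J.IsPrime := hJ
  have := congrArg PrimeSpectrum.asIdeal (Subsingleton.elim (⟨J, hJ'⟩ : PrimeSpectrum _)
    ⟨IsLocalRing.maximalIdeal (Localization.AtPrime p), inferInstance⟩)
  exact this.ge

lemma aux_loc {R : Type*} [CommRing R] [IsLocalRing R] (hn : IsNilpotent (IsLocalRing.maximalIdeal R))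
    (M : Type*) [AddCommGroup M] [Module R M]
    (h : Subsingleton (IsLocalRing.ResidueField R ⊗[R] M)) : Subsingleton M := by
  have e := TensorProduct.quotTensorEquivQuotSMul M (IsLocalRing.maximalIdeal R)
  have h2 : Subsingleton (M ⧸ (IsLocalRing.maximalIdeal R • (⊤ : Submodule R M))) :=
    @Function.Injective.subsingleton _ _ e.symm e.symm.injective h
  rw [Submodule.Quotient.subsingleton_iff] at h2
  obtain ⟨n, hn⟩ := hn
  have h3 : ∀ n : ℕ, (IsLocalRing.maximalIdeal R ^ n) • (⊤ : Submodule R M) = ⊤ := by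
    intro n
    induction n with
    | zero => simp
    | succ n ih => rw [pow_succ, Submodule.mul_smul, h2, ih]
  have h4 := h3 n
  rw [hn] at h4
  rw [← Submodule.subsingleton_iff R, ← subsingleton_iff_bot_eq_top]
  simpa using h4

lemma aux_res {A : Type*} [CommRing A] [IsNoetherianRing A] (p : Ideal A) [p.IsPrime]
    (hp : p ∈ minimalPrimes A) (M : Type*) [AddCommGroup M] [Module A M]
    (h : Subsingleton (p.ResidueField ⊗[A] M)) (m : M) : ∃ s ∉ p, s • m = 0 := by
  have e := AlgebraTensorModule.cancelBaseChange A (Localization.AtPrime p) p.ResidueField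
    p.ResidueField M
  have h1 : Subsingleton (p.ResidueField ⊗[Localization.AtPrime p]
    (Localization.AtPrime p ⊗[A] M)) := e.injective.subsingleton
  have h2 := aux_loc (aux_nil p hp) _ h1
  have h3 : IsLocalizedModule p.primeCompl (TensorProduct.mk A (Localization.AtPrime p) M 1) :=
    inferInstance
  have h4 := (IsLocalizedModule.eq_zero_iff p.primeCompl
    (TensorProduct.mk A (Localization.AtPrime p) M 1) (m := m)).1 (Subsingleton.elim _ _)
  obtain ⟨c, hc⟩ := h4
  exact ⟨c, c.2, hc⟩

lemma comm_alg {A H : Type*} [CommRing A] [CommRing H] [Algebra A H] [IsNoetherianRing A]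
    [Nontrivial A] (inj : Function.Injective (algebraMap A H))
    (epi : ∀ h : H, (1 : H) ⊗ₜ[A] h = h ⊗ₜ[A] (1 : H)) :
    ∃ p : Ideal A, p.IsPrime ∧ ∀ b : H, ∃ s ∉ p, ∃ a : A, s • b = algebraMap A H a := by
  obtain ⟨⟨p, hp⟩⟩ := Ideal.nonempty_minimalPrimes (R := A) (I := ⊥) bot_ne_top
  have hp' : p.IsPrime := hp.1.1
  refine ⟨p, hp', ?_⟩
  let Q := H ⧸ (LinearMap.range (Algebra.linearMap A H))
  have h0 : Subsingleton (H ⊗[A] Q) := by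
    refine subsingleton_of_forall_eq 0 fun x => ?_
    induction x with
    | zero => rfl
    | add x y hx hy => rw [hx, hy, add_zero]
    | tmul h q =>
      obtain ⟨b, rfl⟩ := Submodule.Quotient.mk_surjective _ q
      have h1 := congrArg (fun z => (LinearMap.lTensor H (Submodule.mkQ
        (LinearMap.range (Algebra.linearMap A H)))) ((LinearMap.rTensor H
          (LinearMap.mulLeft A h)) z)) (epi b)
      simp only [LinearMap.rTensor_tmul, LinearMap.lTensor_tmul, LinearMap.mulLeft_apply, mul_one,
        Submodule.mkQ_apply] at h1
      rw [h1]
      have : (Submodule.Quotient.mk 1 : Q) = 0 :=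
        (Submodule.Quotient.mk_eq_zero _).2 ⟨1, by simp⟩
      erw [this, tmul_zero]
  have h1 : Subsingleton (p.ResidueField ⊗[A] (H ⊗[A] Q)) := by infer_instance
  have e := AlgebraTensorModule.distribBaseChange A p.ResidueField H Q
  have h2 : Subsingleton ((p.ResidueField ⊗[A] H) ⊗[p.ResidueField] (p.ResidueField ⊗[A] Q)) :=
    e.symm.injective.subsingleton
  have h3 : Nontrivial (p.ResidueField ⊗[A] H) := by
    by_contra hc
    rw [not_nontrivial_iff_subsingleton] at hc
    obtain ⟨s, hs, hs1⟩ := aux_res p hp H hc 1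
    rw [Algebra.smul_def, mul_one, ← map_zero (algebraMap A H)] at hs1
    exact hs (inj hs1 ▸ p.zero_mem)
  have h4 : Subsingleton (p.ResidueField ⊗[A] Q) :=
    (Module.FaithfullyFlat.subsingleton_tensorProduct_iff_right p.ResidueField
      (p.ResidueField ⊗[A] H)).1 h2
  intro b
  obtain ⟨s, hs, hs1⟩ := aux_res p hp Q h4 (Submodule.Quotient.mk b)
  rw [← Submodule.Quotient.mk_smul, Submodule.Quotient.mk_eq_zero] at hs1
  obtain ⟨a, ha⟩ := hs1
  exact ⟨s, hs, a, ha.symm⟩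

section
variable {k : Type*} [Field k] {H : Type*} [CommRing H] [HopfAlgebra k H]

lemma T_alg (A : Subalgebra k H) :
    (T (Subalgebra.toSubmodule A) (Subalgebra.toSubmodule A)) =
    Subalgebra.toSubmodule (Algebra.TensorProduct.map A.val A.val).range := by
  exact (TensorProduct.range_mapIncl _ _).symm

lemma epi_aux (A : Subalgebra k H)
    (hΔ : ∀ a ∈ A, comul a ∈ T (Subalgebra.toSubmodule A) (Subalgebra.toSubmodule A))
    (hgen : ∀ h : H, counit (R := k) h = 0 →
      h ∈ Ideal.span {a : H | a ∈ A ∧ counit (R := k) a = 0}) (h : H) :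
    (1 : H) ⊗ₜ[A] h = h ⊗ₜ[A] (1 : H) := by
  let x : H →ₐ[k] H ⊗[A] H := (Algebra.TensorProduct.includeLeft : H →ₐ[A] H ⊗[A] H).restrictScalars k
  let y : H →ₐ[k] H ⊗[A] H := (Algebra.TensorProduct.includeRight : H →ₐ[A] H ⊗[A] H).restrictScalars k
  have hxy : ∀ a ∈ A, x a = y a := by
    intro a ha
    have h1 := (Algebra.TensorProduct.includeLeft : H →ₐ[A] H ⊗[A] H).commutes ⟨a, ha⟩
    have h2 := (Algebra.TensorProduct.includeRight : H →ₐ[A] H ⊗[A] H).commutes ⟨a, ha⟩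
    exact h1.trans h2.symm
  let φ : H →ₐ[k] H ⊗[A] H := (Algebra.TensorProduct.lmul' k).comp
    ((Algebra.TensorProduct.map (x.comp (HopfAlgebra.antipodeAlgHom k H)) y).comp
      (Bialgebra.comulAlgHom k H))
  have hφ : toConv φ.toLinearMap = toConv (x.toLinearMap ∘ₗ HopfAlgebra.antipode k) *
    toConv y.toLinearMap := rfl
  have hφA : ∀ a ∈ A, φ a = algebraMap k _ (counit (R := k) a) := by
    intro a ha
    have h1 : ∀ w ∈ T (Subalgebra.toSubmodule A) (Subalgebra.toSubmodule A),
        (LinearMap.mul' k (H ⊗[A] H)) (TensorProduct.map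
          (x.toLinearMap ∘ₗ HopfAlgebra.antipode k) y.toLinearMap w) =
        (LinearMap.mul' k (H ⊗[A] H)) (TensorProduct.map
          (x.toLinearMap ∘ₗ HopfAlgebra.antipode k) x.toLinearMap w) := by
      intro w hw
      have : T (Subalgebra.toSubmodule A) (Subalgebra.toSubmodule A) ≤ LinearMap.eqLocus
        ((LinearMap.mul' k (H ⊗[A] H)) ∘ₗ (TensorProduct.map
          (x.toLinearMap ∘ₗ HopfAlgebra.antipode k) y.toLinearMap))
        ((LinearMap.mul' k (H ⊗[A] H)) ∘ₗ (TensorProduct.map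
          (x.toLinearMap ∘ₗ HopfAlgebra.antipode k) x.toLinearMap)) := by
        refine Submodule.map₂_le.2 fun m hm n hn => ?_
        have := hxy n hn
        simp [LinearMap.mem_eqLocus, this]
      exact this hw
    have h2 := congrArg (fun f => f.ofConv a) (conv_inv_left x)
    exact (h1 _ (hΔ a ha)).trans h2
  have hker : ∀ h : H, counit (R := k) h = 0 → φ h = 0 := by
    intro h hh
    have : Ideal.span {a : H | a ∈ A ∧ counit (R := k) a = 0} ≤ RingHom.ker φ := by
      refine Ideal.span_le.2 ?_
      rintro a ⟨ha, ha0⟩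
      change φ a = 0
      rw [hφA a ha, ha0, map_zero]
    exact this (hgen h hh)
  have hφ1 : toConv φ.toLinearMap = 1 := by
    apply WithConv.ofConv_injective
    ext h
    have h1 := hker (h - algebraMap k H (counit (R := k) h)) (by simp)
    rw [map_sub, sub_eq_zero, AlgHom.commutes] at h1
    exact h1
  have hfin : toConv y.toLinearMap = toConv x.toLinearMap := by
    have h1 : toConv x.toLinearMap * toConv φ.toLinearMap = toConv y.toLinearMap := by
      rw [hφ, ← mul_assoc, conv_inv_right, one_mul]
    rw [← h1, hφ1, mul_one]
  exact congrArg (fun f => f.ofConv h) hfin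

lemma key_aux (A : Subalgebra k H) [IsNoetherianRing A]
    (hΔ : ∀ a ∈ A, comul a ∈ T (Subalgebra.toSubmodule A) (Subalgebra.toSubmodule A))
    (hS : ∀ a ∈ A, HopfAlgebra.antipode k a ∈ A)
    (hgen : ∀ h : H, counit (R := k) h = 0 →
      h ∈ Ideal.span {a : H | a ∈ A ∧ counit (R := k) a = 0}) (b : H) : b ∈ A := by
  have hnt : Nontrivial H := (Bialgebra.counitAlgHom k H).toRingHom.domain_nontrivial
  obtain ⟨p, hp, hloc⟩ := comm_alg (A := A) (H := H) Subtype.val_injective (epi_aux A hΔ hgen)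
  obtain ⟨C, ⟨t, rfl⟩, hbC, hCC⟩ := fin_one (k := k) b
  set C := Submodule.span k (t : Set H) with hC
  choose σ hσ hσ' using hloc
  let I : Submodule k H :=
    { carrier := {s | s ∈ A ∧ ∀ c ∈ C, s * c ∈ A}
      add_mem' := fun {x y} hx hy => ⟨add_mem hx.1 hy.1, fun c hc => by
        rw [add_mul]; exact add_mem (hx.2 c hc) (hy.2 c hc)⟩
      zero_mem' := ⟨zero_mem _, fun c hc => by simp⟩
      smul_mem' := fun r x hx => ⟨A.smul_mem hx.1 r, fun c hc => by
        rw [smul_mul_assoc]; exact A.smul_mem (hx.2 c hc) r⟩ }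
  have hIA : ∀ a ∈ A, ∀ i ∈ I, a * i ∈ I := fun a ha i hi =>
    ⟨mul_mem ha hi.1, fun c hc => by rw [mul_assoc]; exact mul_mem ha (hi.2 c hc)⟩
  obtain ⟨s, hsI, hs0⟩ : ∃ s ∈ I, s ≠ 0 := by
    let s : A := ∏ c ∈ t, σ c
    have hs : s ∉ p := by
      intro h
      obtain ⟨c, hc, hc'⟩ := (Ideal.IsPrime.prod_mem_iff (hp := hp)).1 h
      exact hσ c hc'
    refine ⟨s, ⟨s.2, fun c hc => ?_⟩, fun h => hs ?_⟩
    · have : C ≤ (Subalgebra.toSubmodule A).comap (LinearMap.mulLeft k (s : H)) := by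
        refine Submodule.span_le.2 fun c hc => ?_
        obtain ⟨a, ha⟩ := hσ' c
        obtain ⟨r, hr⟩ := Finset.dvd_prod_of_mem σ hc
        change (s : H) * c ∈ A
        have e : s = σ c * r := hr
        have ha' : ((σ c : A) : H) * c = a := ha
        have : (s : H) * c = r * a := by
          rw [e, ← ha']; push_cast; ring
        rw [this]
        exact (r * a).2
      exact this hc
    · have : s = 0 := Subtype.ext h
      rw [this]; exact p.zero_mem
  have hmulT : ∀ (z : H) (w : H ⊗[k] H), w ∈ T ⊤ (Subalgebra.toSubmodule A) →
      (z ⊗ₜ[k] (1 : H)) * w ∈ T ⊤ (Subalgebra.toSubmodule A) := by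
    intro z w hw
    have : T ⊤ (Subalgebra.toSubmodule A) ≤ (T ⊤ (Subalgebra.toSubmodule A)).comap
        (LinearMap.mulLeft k (z ⊗ₜ[k] (1 : H))) := by
      refine Submodule.map₂_le.2 fun m hm n hn => ?_
      have := Submodule.apply_mem_map₂ (TensorProduct.mk k H H) (Submodule.mem_top (x := z * m)) hn
      simpa using this
    exact this hw
  have hLI : ∀ s ∈ I, ∀ f : H →ₗ[k] k, lf f (comul s) ∈ I := by
    intro s hs f
    refine ⟨T_lf (hΔ s hs.1) f, fun c hc => ?_⟩
    have h1 : ∀ w : H ⊗[k] H, lf f w * c = lf f (w * (1 ⊗ₜ[k] c)) := by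
      intro w
      induction w with
      | zero => simp
      | add x y hx hy => simp only [map_add, add_mul, hx, hy]
      | tmul x y => simp
    rw [h1]
    refine T_lf (P := ⊤) (Q := Subalgebra.toSubmodule A) ?_ f
    have h2 : (1 : H) ⊗ₜ[k] c = LinearMap.mul' k (H ⊗[k] H) (TensorProduct.map
        ((i1 (k := k) (H := H)).toLinearMap ∘ₗ HopfAlgebra.antipode k) comul (comul c)) :=
      congrArg (fun f => f.ofConv c) (conv_i2 (k := k) (H := H))
    rw [h2]
    have h3 : T C C ≤ (T ⊤ (Subalgebra.toSubmodule A)).comap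
        (LinearMap.mulLeft k (comul s) ∘ₗ LinearMap.mul' k (H ⊗[k] H) ∘ₗ (TensorProduct.map
        ((i1 (k := k) (H := H)).toLinearMap ∘ₗ HopfAlgebra.antipode k) comul)) := by
      refine Submodule.map₂_le.2 fun m hm n hn => ?_
      have h4 := hmulT (HopfAlgebra.antipode k m) (comul (s * n))
        (T_mono le_top le_rfl (hΔ _ (hs.2 n hn)))
      rw [Bialgebra.comul_mul, mul_left_comm] at h4
      simpa using h4
    exact h3 (hCC c hc)
  obtain ⟨f, hf⟩ : ∃ f : H →ₗ[k] k, f s ≠ 0 := by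
    by_contra! hcon
    exact hs0 ((Module.forall_dual_apply_eq_zero_iff k s).1 hcon)
  set u := lf f (comul s) with hu
  have huI : u ∈ I := hLI s hsI f
  have hεu : counit (R := k) u = f s := by
    have h1 : ∀ w : H ⊗[k] H, counit (R := k) (lf f w) = f (rf counit w) := by
      intro w
      induction w with
      | zero => simp
      | add x y hx hy => simp only [map_add, hx, hy]
      | tmul x y => simp [mul_comm]
    rw [hu, h1]
    exact congrArg f (Rf_counit s)
  have hT : comul u ∈ T (Subalgebra.toSubmodule A) I :=
    crit (hLI u huI) (T_rf (hΔ u huI.1))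
  have h5 : T (Subalgebra.toSubmodule A) I ≤ I.comap
      (LinearMap.mul' k H ∘ₗ (HopfAlgebra.antipode k).rTensor H) := by
    refine Submodule.map₂_le.2 fun m hm n hn => ?_
    simpa using hIA _ (hS m hm) n hn
  have h6 : algebraMap k H (f s) ∈ I := by
    have := h5 hT
    rw [Submodule.mem_comap, LinearMap.comp_apply,
      HopfAlgebra.mul_antipode_rTensor_comul_apply, hεu] at this
    exact this
  have h7 := h6.2 b hbC
  have h8 := A.smul_mem h7 (f s)⁻¹
  rwa [← Algebra.smul_def, smul_smul, inv_mul_cancel₀ hf, one_smul] at h8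
end

theorem commutative_hopf_algebra_affine_iff_noetherian
    (k : Type u) [Field k] (H : Type v) [CommRing H] [HopfAlgebra k H] :
    Algebra.FiniteType k H ↔ IsNoetherianRing H := by
  classical
  refine ⟨fun h => Algebra.FiniteType.isNoetherianRing k H, fun hN => ?_⟩
  obtain ⟨s, hs⟩ := IsNoetherian.noetherian (R := H) (M := H)
    (RingHom.ker (Bialgebra.counitAlgHom k H))
  obtain ⟨C, ⟨t, rfl⟩, hsC, hCC⟩ := fin_many (k := k) s
  set C := Submodule.span k (t : Set H) with hC
  let A := Algebra.adjoin k (((t ∪ t.image (HopfAlgebra.antipode k) : Finset H)) : Set H)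
  have htA : ∀ c ∈ t, c ∈ A := fun c hc => Algebra.subset_adjoin (by simp [hc])
  have htA' : ∀ c ∈ t, HopfAlgebra.antipode k c ∈ A := fun c hc =>
    Algebra.subset_adjoin (Finset.mem_coe.2 (Finset.mem_union_right _
      (Finset.mem_image_of_mem _ hc)))
  have hCA : C ≤ Subalgebra.toSubmodule A := Submodule.span_le.2 htA
  have hCA' : C ≤ (Subalgebra.toSubmodule A).comap (HopfAlgebra.antipode k) :=
    Submodule.span_le.2 htA'
  have hS : ∀ a ∈ A, HopfAlgebra.antipode k a ∈ A := by
    have : A ≤ A.comap (HopfAlgebra.antipodeAlgHom k H) := by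
      refine Algebra.adjoin_le fun x hx => ?_
      change HopfAlgebra.antipode k x ∈ A
      rcases Finset.mem_union.1 (Finset.mem_coe.1 hx) with hx | hx
      · exact htA' x hx
      · obtain ⟨c, hc, rfl⟩ := Finset.mem_image.1 hx
        rw [anti_anti]
        exact htA c hc
    exact this
  have hΔ : ∀ a ∈ A, comul a ∈ T (Subalgebra.toSubmodule A) (Subalgebra.toSubmodule A) := by
    have : A ≤ (Algebra.TensorProduct.map A.val A.val).range.comap (Bialgebra.comulAlgHom k H) := by
      refine Algebra.adjoin_le fun x hx => ?_
      change comul x ∈ Subalgebra.toSubmodule (Algebra.TensorProduct.map A.val A.val).range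
      rw [← T_alg]
      rcases Finset.mem_union.1 (Finset.mem_coe.1 hx) with hx | hx
      · exact T_mono hCA hCA (hCC x (Submodule.subset_span hx))
      · obtain ⟨c, hc, rfl⟩ := Finset.mem_image.1 hx
        have h2 : comul (HopfAlgebra.antipode k c) = LinearMap.mul' k (H ⊗[k] H) (TensorProduct.map
          ((i2 (k := k) (H := H)).toLinearMap ∘ₗ HopfAlgebra.antipode k)
          ((i1 (k := k) (H := H)).toLinearMap ∘ₗ HopfAlgebra.antipode k) (comul c)) :=
          congrArg (fun f => f.ofConv c) (comul_anti (k := k) (H := H))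
        rw [h2]
        have h3 : T C C ≤ (T (Subalgebra.toSubmodule A) (Subalgebra.toSubmodule A)).comap
            (LinearMap.mul' k (H ⊗[k] H) ∘ₗ (TensorProduct.map
          ((i2 (k := k) (H := H)).toLinearMap ∘ₗ HopfAlgebra.antipode k)
          ((i1 (k := k) (H := H)).toLinearMap ∘ₗ HopfAlgebra.antipode k))) := by
          refine Submodule.map₂_le.2 fun m hm n hn => ?_
          have := Submodule.apply_mem_map₂ (TensorProduct.mk k H H)
            (Submodule.mem_comap.1 (hCA' hn)) (Submodule.mem_comap.1 (hCA' hm))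
          simpa using this
        exact h3 (hCC c (Submodule.subset_span hc))
    intro a ha
    rw [T_alg]
    exact this ha
  have hfg : A.FG := ⟨_, rfl⟩
  have hft : Algebra.FiniteType k A := (Subalgebra.fg_iff_finiteType A).1 hfg
  have hNA : IsNoetherianRing A := Algebra.FiniteType.isNoetherianRing k A
  have hgen : ∀ h : H, counit (R := k) h = 0 →
      h ∈ Ideal.span {a : H | a ∈ A ∧ counit (R := k) a = 0} := by
    intro h hh
    have h1 : h ∈ RingHom.ker (Bialgebra.counitAlgHom k H) := hh
    rw [← hs] at h1
    refine Ideal.span_mono ?_ h1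
    intro x hx
    refine ⟨hCA (hsC hx), ?_⟩
    have : x ∈ RingHom.ker (Bialgebra.counitAlgHom k H) := hs ▸ Submodule.subset_span hx
    exact this
  have htop : A = ⊤ := top_unique fun b _ => key_aux A hΔ hS hgen b
  exact ⟨htop ▸ hfg⟩
end

section
/- (Cartier) Let k be a field of characteristic 0 and let H be a commutative Hopf algebra over k. Then H is semiprime, i.e., H is a reduced ring (it has no nonzero nilpotent elements). -/
open TensorProduct

theorem deriv_nilp {A : Type*} [CommRing A] [Algebra ℚ A] (D : A → A)
    (h0 : D 0 = 0)
    (hD : ∀ a b, D (a * b) = a * D b + b * D a) {x : A} (hx : IsNilpotent x) :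
    IsNilpotent (D x) := by
  have h1 : D 1 = 0 := by simpa using hD 1 1
  have hp : ∀ (a : A) (n : ℕ), D (a ^ (n+1)) = ((n+1 : ℕ) : A) * a ^ n * D a := by
    intro a n
    induction n with
    | zero => simp
    | succ n ih => rw [pow_succ, hD, ih]; push_cast; ring
  have hcan : ∀ (n : ℕ) (a : A), ((n + 1 : ℕ) : A) * a = 0 → a = 0 := by
    intro n a h
    have : (((n + 1 : ℕ) : ℚ)) • a = 0 := by
      rw [Algebra.smul_def]; simpa using h
    exact (smul_eq_zero_iff_right (by positivity)).1 this
  obtain ⟨n, hn⟩ := hx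
  -- general claim
  have key : ∀ (m j : ℕ), x ^ m * (D x) ^ j = 0 → ∃ j, (D x) ^ j = 0 := by
    intro m
    induction m with
    | zero => intro j h; exact ⟨j, by simpa using h⟩
    | succ m ih =>
      intro j h
      refine ih (j + 2) (hcan m _ ?_)
      have h2 : x ^ (m + 1) * (D x) ^ (j + 1) = 0 := by rw [pow_succ (D x), ← mul_assoc, h, zero_mul]
      have h3 := congrArg D h2
      rw [hD, hp, hp, h0] at h3
      have h4 : x ^ (m+1) * (((j + 1 : ℕ) : A) * D x ^ j * D (D x)) = 0 := by
        linear_combination (((j + 1 : ℕ) : A) * D (D x)) * h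
      rw [h4, zero_add] at h3
      linear_combination h3
  exact key n 0 (by simpa using hn)

section L1
variable {K A : Type*} [Field K] [CommRing A] [Algebra K A]

/-- contraction `u ⊗ v ↦ u * g v` -/
noncomputable def contr (g : A →ₗ[K] A) : A ⊗[K] A →ₗ[K] A :=
  LinearMap.mul' K A ∘ₗ LinearMap.lTensor A g

@[simp] theorem contr_tmul (g : A →ₗ[K] A) (u v : A) : contr g (u ⊗ₜ[K] v) = u * g v := by
  simp [contr]

noncomputable def epsL (ε : A →ₐ[K] K) : A →ₗ[K] A := (Algebra.linearMap K A) ∘ₗ ε.toLinearMap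

@[simp] theorem epsL_apply (ε : A →ₐ[K] K) (a : A) : epsL ε a = algebraMap K A (ε a) := rfl

theorem contr_mul (ε : A →ₐ[K] K) (g : A →ₗ[K] A)
    (hg : ∀ a b, g (a * b) = algebraMap K A (ε a) * g b + algebraMap K A (ε b) * g a)
    (z w : A ⊗[K] A) :
    contr g (z * w) = contr (epsL ε) z * contr g w + contr (epsL ε) w * contr g z := by
  induction z using TensorProduct.induction_on with
  | zero => simp
  | add z z' h h' => simp only [add_mul, map_add, h, h', mul_add]; ring
  | tmul u v =>
    induction w using TensorProduct.induction_on with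
    | zero => simp
    | add z z' h h' => simp only [add_mul, map_add, h, h', mul_add]; ring
    | tmul u' v' => simp [hg]; ring

theorem contr_deriv (Δ : A →ₐ[K] A ⊗[K] A) (ε : A →ₐ[K] K)
    (hr : ∀ a, contr (epsL ε) (Δ a) = a) (g : A →ₗ[K] A)
    (hg : ∀ a b, g (a * b) = algebraMap K A (ε a) * g b + algebraMap K A (ε b) * g a)
    (a b : A) : contr g (Δ (a * b)) = a * contr g (Δ b) + b * contr g (Δ a) := by
  rw [map_mul, contr_mul ε g hg, hr, hr]

theorem exists_q (ε : A →ₐ[K] K) : ∃ q : A →ₗ[K] A,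
    (∀ a, q a ∈ RingHom.ker ε) ∧ (∀ a, q a - (a - algebraMap K A (ε a)) ∈ RingHom.ker ε ^ 2) ∧
    (∀ a b, q (a * b) = algebraMap K A (ε a) * q b + algebraMap K A (ε b) * q a) := by
  set I : Ideal A := RingHom.ker ε with hI
  obtain ⟨r, hr⟩ := ((I^2).restrictScalars K).subtype.exists_leftInverse_of_injective
    (Submodule.ker_subtype _)
  have hr' : ∀ a ∈ I^2, ((r a : _) : A) = a := fun a ha =>
    congrArg Subtype.val (LinearMap.congr_fun hr ⟨a, ha⟩)
  have hm : ∀ a, a - algebraMap K A (ε a) ∈ I := fun a => by simp [hI, RingHom.mem_ker]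
  let p : A →ₗ[K] A := LinearMap.id - ((I^2).restrictScalars K).subtype ∘ₗ r
  have hp : ∀ a, p a = a - (r a : A) := fun a => rfl
  let t : A →ₗ[K] A := LinearMap.id - epsL ε
  have ht : ∀ a, t a = a - algebraMap K A (ε a) := fun a => rfl
  have hrm : ∀ a, (r a : A) ∈ I^2 := fun a => (r a).2
  refine ⟨p ∘ₗ t, fun a => ?_, fun a => ?_, fun a b => ?_⟩
  · simp only [LinearMap.comp_apply, hp, ht]
    exact I.sub_mem (hm a) (Ideal.pow_le_self two_ne_zero (hrm _))
  · simp only [LinearMap.comp_apply, hp, ht]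
    rw [sub_sub_cancel_left]
    exact neg_mem (hrm _)
  · have e : t (a * b) = t a * t b + (ε a • t b + ε b • t a) := by
      simp only [ht, Algebra.smul_def, map_mul]; ring
    have e2 : p (t a * t b) = 0 := by
      rw [hp, hr', sub_self]
      rw [pow_two]; exact Ideal.mul_mem_mul (hm a) (hm b)
    simp only [LinearMap.comp_apply]
    rw [e, map_add, e2, zero_add, map_add, map_smul, map_smul, Algebra.smul_def, Algebra.smul_def]

theorem nilp_mem_pow [CharZero K] (Δ : A →ₐ[K] A ⊗[K] A) (ε : A →ₐ[K] K)
    (hr : ∀ a, contr (epsL ε) (Δ a) = a)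
    (hl : ∀ a, TensorProduct.lid K A (LinearMap.rTensor A ε.toLinearMap (Δ a)) = a)
    (n : ℕ) : ∀ x : A, IsNilpotent x → x ∈ RingHom.ker ε ^ n := by
  let _ : Algebra ℚ A := ((algebraMap K A).comp (algebraMap ℚ K)).toAlgebra
  obtain ⟨q, hq1, hq2, hq3⟩ := exists_q ε
  set I : Ideal A := RingHom.ker ε with hI
  have hm : ∀ a, a - algebraMap K A (ε a) ∈ I := fun a => by simp [hI, RingHom.mem_ker]
  have E1 : ∀ z : A ⊗[K] A, contr q z -
      q (TensorProduct.lid K A (LinearMap.rTensor A ε.toLinearMap z)) ∈ I ^ 2 := by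
    intro z
    induction z using TensorProduct.induction_on with
    | zero => simp
    | add z w h h' =>
      simp only [map_add]
      rw [add_sub_add_comm]; exact add_mem h h'
    | tmul u v =>
      have : u * q v - algebraMap K A (ε u) * q v = (u - algebraMap K A (ε u)) * q v := by ring
      simp only [contr_tmul, LinearMap.rTensor_tmul, TensorProduct.lid_tmul, map_smul,
        AlgHom.toLinearMap_apply]
      rw [Algebra.smul_def, this, pow_two]
      exact Ideal.mul_mem_mul (hm u) (hq1 v)
  have E2 : ∀ a ∈ I, contr q (Δ a) - a ∈ I ^ 2 := by
    intro a ha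
    have h1 := E1 (Δ a)
    rw [hl] at h1
    have h2 := hq2 a
    rw [(RingHom.mem_ker (f := ε)).1 ha, map_zero, sub_zero] at h2
    simpa using add_mem h1 h2
  have E3 : ∀ m : ℕ, ∀ x ∈ I ^ m, contr q (Δ x) - (m : A) * x ∈ I ^ (m + 1) := by
    intro m
    induction m with
    | zero =>
      intro x _
      have h1 := E1 (Δ x)
      rw [hl] at h1
      have := add_mem (Ideal.pow_le_self two_ne_zero h1) (hq1 x)
      simpa using this
    | succ m ih =>
      intro x hx
      rw [pow_succ] at hx
      refine Submodule.mul_induction_on hx (fun y hy a ha => ?_) (fun y z h h' => ?_)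
      · rw [contr_deriv Δ ε hr q hq3]
        have : y * contr q (Δ a) + a * contr q (Δ y) - ((m + 1 : ℕ) : A) * (y * a) =
          y * (contr q (Δ a) - a) + (contr q (Δ y) - m * y) * a := by push_cast; ring
        rw [this]
        refine add_mem ?_ ?_
        · have := Ideal.mul_mem_mul hy (E2 a ha)
          rwa [← pow_add] at this
        · have := Ideal.mul_mem_mul (ih y hy) ha
          rwa [← pow_succ] at this
      · have : contr q (Δ (y + z)) - ((m + 1 : ℕ) : A) * (y + z) =
          (contr q (Δ y) - ((m + 1 : ℕ) : A) * y) + (contr q (Δ z) - ((m + 1 : ℕ) : A) * z) := by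
          simp only [map_add]; ring
        rw [this]; exact add_mem h h'
  -- coordinates
  let Q : A →ₗ[K] (I.restrictScalars K) := q.codRestrict (I.restrictScalars K) hq1
  let b := Module.Basis.ofVectorSpace K (I.restrictScalars K)
  let g : Module.Basis.ofVectorSpaceIndex K (I.restrictScalars K) → (A →ₗ[K] A) := fun j =>
    Algebra.linearMap K A ∘ₗ b.coord j ∘ₗ Q
  have hg : ∀ j v, g j v = algebraMap K A (b.repr (Q v) j) := fun j v => rfl
  have hQ : ∀ c d, Q (c * d) = ε c • Q d + ε d • Q c := by
    intro c d
    apply Subtype.ext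
    change q (c * d) = ε c • q d + ε d • q c
    rw [hq3, Algebra.smul_def, Algebra.smul_def]
  have hgd : ∀ j c d, g j (c * d) = algebraMap K A (ε c) * g j d + algebraMap K A (ε d) * g j c := by
    intro j c d
    rw [hg, hg, hg, hQ]
    simp
  have C : ∀ z : A ⊗[K] A, ∃ s : Finset _, ∀ s', s ⊆ s' →
      contr q z = ∑ j ∈ s', contr (g j) z * (b j : A) := by
    classical
    intro z
    induction z using TensorProduct.induction_on with
    | zero => exact ⟨∅, by simp⟩
    | add z w h h' =>
      obtain ⟨s, hs⟩ := h
      obtain ⟨t, ht⟩ := h'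
      refine ⟨s ∪ t, fun s' hs' => ?_⟩
      simp only [map_add, add_mul, Finset.sum_add_distrib]
      rw [hs s' (Finset.union_subset_left hs'), ht s' (Finset.union_subset_right hs')]
    | tmul u v =>
      refine ⟨(b.repr (Q v)).support, fun s' hs' => ?_⟩
      have h1 : q v = ((∑ j ∈ s', b.repr (Q v) j • b j : I.restrictScalars K) : A) := by
        have h2 := b.linearCombination_repr (Q v)
        rw [Finsupp.linearCombination_apply, Finsupp.sum_of_support_subset _ hs' _ (by simp)] at h2
        rw [h2]; rfl
      simp only [contr_tmul, hg]
      rw [h1]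
      simp [Finset.mul_sum, Algebra.smul_def, mul_assoc]
  induction n with
  | zero => simp
  | succ m ih =>
    intro x hx
    rcases Nat.eq_zero_or_pos m with rfl | hmpos
    · simp only [zero_add, pow_one, hI, RingHom.mem_ker]
      exact (hx.map ε).eq_zero
    have F1 : contr q (Δ x) ∈ I ^ (m + 1) := by
      obtain ⟨s, hs⟩ := C (Δ x)
      rw [hs s subset_rfl]
      refine sum_mem fun j _ => ?_
      rw [pow_succ]
      refine Ideal.mul_mem_mul (ih _ ?_) (b j).2
      exact deriv_nilp (fun a => contr (g j) (Δ a)) (by simp)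
        (contr_deriv Δ ε hr (g j) (hgd j)) hx
    have F2 := sub_mem F1 (E3 m x (ih x hx))
    rw [sub_sub_cancel] at F2
    have hu : (algebraMap K A ((m : K)⁻¹)) * ((m : A) * x) = x := by
      rw [← mul_assoc, ← map_natCast (algebraMap K A) m, ← map_mul,
        inv_mul_cancel₀ (by exact_mod_cast hmpos.ne'), map_one, one_mul]
    rw [← hu]
    exact Ideal.mul_mem_left _ _ F2
end L1

section L2
open Coalgebra
variable {K H : Type*} [Field K]

/-- a finite matrix coalgebra around `x` -/
theorem exists_matrix [AddCommGroup H] [Module K H] [Coalgebra K H] (x : H) :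
    ∃ (n : ℕ) (c : Fin n → Fin n → H),
      (∀ i j, comul (R := K) (c i j) = ∑ l, c i l ⊗ₜ[K] c l j) ∧
      x ∈ Submodule.span K (Set.range fun p : Fin n × Fin n => c p.1 p.2) := by
  classical
  let b := Module.Basis.ofVectorSpace K H
  obtain ⟨v, hv⟩ := TensorProduct.eq_repr_basis_right b (comul (R := K) x)
  let V : Submodule K H := Submodule.span K (v.support.image v : Set H)
  have hvV : ∀ j, v j ∈ V := by
    intro j
    by_cases hj : j ∈ v.support
    · exact Submodule.subset_span (Finset.mem_image_of_mem _ hj)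
    · rw [Finsupp.notMem_support_iff.1 hj]; exact V.zero_mem
  have : FiniteDimensional K V := FiniteDimensional.span_finset K _
  have hxV : x ∈ V := by
    have h := congrArg (TensorProduct.rid K H) (lTensor_counit_comul (R := K) x)
    rw [← hv] at h
    simp only [Finsupp.sum, map_sum, LinearMap.lTensor_tmul, TensorProduct.rid_tmul, one_smul] at h
    rw [← h]
    exact sum_mem fun j _ => V.smul_mem _ (hvV j)
  let e := Module.finBasis K V
  let n := Module.finrank K V
  let L : (Fin n → H) →ₗ[K] H ⊗[K] H :=
    ∑ i, TensorProduct.mk K H H (e i : H) ∘ₗ LinearMap.proj i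
  have hL : ∀ c, L c = ∑ i, (e i : H) ⊗ₜ[K] c i := fun c => by simp [L]
  have hL1 : ∀ u ∈ V, ∀ h : H, u ⊗ₜ[K] h ∈ LinearMap.range L := by
    intro u hu h
    refine ⟨fun i => e.repr ⟨u, hu⟩ i • h, ?_⟩
    rw [hL]
    have := congrArg Subtype.val (e.sum_repr ⟨u, hu⟩)
    simp only [Submodule.coe_sum, Submodule.coe_smul] at this
    conv_rhs => rw [← this]
    simp [TensorProduct.sum_tmul, TensorProduct.smul_tmul]
  have hL2 : ∀ u ∈ V, comul (R := K) u ∈ LinearMap.range L := by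
    intro u hu
    refine (Submodule.span_le (p := (LinearMap.range L).comap (comul (R := K)))).2 ?_ hu
    intro w hw
    obtain ⟨l, hl, rfl⟩ := Finset.mem_image.1 (Finset.mem_coe.1 hw)
    have hco := coassoc_apply (R := K) x
    rw [← hv] at hco
    have h2 := congrArg (LinearMap.lTensor H ((TensorProduct.rid K H).toLinearMap ∘ₗ
      LinearMap.lTensor H (b.coord l))) hco
    simp only [Finsupp.sum, map_sum, LinearMap.lTensor_tmul, LinearMap.rTensor_tmul] at h2
    have h3 : ∀ (z : H ⊗[K] H) (h : H), LinearMap.lTensor H ((TensorProduct.rid K H).toLinearMap ∘ₗ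
      LinearMap.lTensor H (b.coord l)) (TensorProduct.assoc K H H H (z ⊗ₜ h)) = b.coord l h • z := by
      intro z h
      induction z using TensorProduct.induction_on with
      | zero => simp
      | add z w h h' => simp only [TensorProduct.add_tmul, map_add, h, h', smul_add]
      | tmul u w => simp
    simp only [h3, Module.Basis.coord_apply, Module.Basis.repr_self] at h2
    rw [Finset.sum_eq_single l] at h2
    · simp only [Finsupp.single_eq_same, one_smul] at h2
      change comul (R := K) (v l) ∈ LinearMap.range L
      rw [h2]
      exact sum_mem fun j _ => hL1 _ (hvV j) _
    · intro j _ hj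
      rw [Finsupp.single_eq_of_ne (by tauto), zero_smul]
    · intro h; exact absurd hl h
  choose c hc using fun j => hL2 (e j) (e j).2
  -- c j i
  refine ⟨n, fun i j => c j i, fun i j => ?_, ?_⟩
  · obtain ⟨f, hf⟩ := LinearMap.exists_extend (e.coord i)
    have hfe : ∀ l, f (e l) = if l = i then 1 else 0 := by
      intro l
      have := LinearMap.congr_fun hf (e l)
      simpa [Finsupp.single_apply] using this
    have hco := coassoc_apply (R := K) (e j : H)
    rw [← hc j, hL] at hco
    simp only [map_sum, LinearMap.lTensor_tmul, LinearMap.rTensor_tmul, ← hc, hL,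
      TensorProduct.sum_tmul, TensorProduct.assoc_tmul] at hco
    have h2 := congrArg (TensorProduct.lid K (H ⊗[K] H) ∘ LinearMap.rTensor (H ⊗[K] H) f) hco
    simp only [Function.comp, map_sum, LinearMap.rTensor_tmul, TensorProduct.lid_tmul, hfe] at h2
    simp only [ite_smul, one_smul, zero_smul, Finset.sum_ite_eq', Finset.sum_ite_eq,
      Finset.mem_univ, if_true] at h2
    exact h2.symm
  · have hej : ∀ j, (e j : H) ∈
        Submodule.span K (Set.range fun p : Fin n × Fin n => c p.2 p.1) := by
      intro j
      have h := congrArg (TensorProduct.lid K H) (rTensor_counit_comul (R := K) (e j : H))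
      rw [← hc, hL] at h
      simp only [map_sum, LinearMap.rTensor_tmul, TensorProduct.lid_tmul, one_smul] at h
      rw [← h]
      exact sum_mem fun i _ => Submodule.smul_mem _ _ (Submodule.subset_span ⟨(i, j), rfl⟩)
    have := congrArg Subtype.val (e.sum_repr ⟨x, hxV⟩)
    simp only [Submodule.coe_sum, Submodule.coe_smul] at this
    rw [← this]
    exact sum_mem fun i _ => Submodule.smul_mem _ _ (hej i)

theorem exists_unit_ann [CharZero K] [CommRing H] [Bialgebra K H] (y : H) (hy : IsNilpotent y) :
    ∃ s : H, s * y = 0 ∧ counit (R := K) s = 1 := by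
  obtain ⟨n, c, hc, hyc⟩ := exists_matrix (K := K) y
  let S : Set H := Set.range fun p : Fin n × Fin n => c p.1 p.2
  let A : Subalgebra K H := Algebra.adjoin K S
  have hcA : ∀ i j, c i j ∈ A := fun i j => Algebra.subset_adjoin ⟨(i, j), rfl⟩
  have hyA : y ∈ A := Algebra.span_le_adjoin K S hyc
  have hfg : A.FG := Subalgebra.fg_def.2 ⟨S, Set.finite_range _, rfl⟩
  have : Algebra.FiniteType K A := A.fg_iff_finiteType.1 hfg
  have : IsNoetherianRing A := Algebra.FiniteType.isNoetherianRing K A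
  let ι : A ⊗[K] A →ₐ[K] H ⊗[K] H := Algebra.TensorProduct.map A.val A.val
  have hι : Function.Injective ι := by
    change Function.Injective (TensorProduct.map A.val.toLinearMap A.val.toLinearMap)
    exact TensorProduct.map_injective_of_flat_flat _ _ Subtype.val_injective Subtype.val_injective
  have hΔ : ∀ a : A, (Bialgebra.comulAlgHom K H).comp A.val a ∈ ι.range := by
    intro a
    have : A ≤ ι.range.comap (Bialgebra.comulAlgHom K H) := by
      refine Algebra.adjoin_le ?_
      rintro _ ⟨⟨i, j⟩, rfl⟩
      change comul (R := K) (c i j) ∈ ι.range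
      rw [hc]
      exact sum_mem fun l _ => ⟨(⟨c i l, hcA i l⟩ : A) ⊗ₜ (⟨c l j, hcA l j⟩ : A), by simp [ι]⟩
    exact this a.2
  let Δ : A →ₐ[K] A ⊗[K] A := (AlgEquiv.ofInjective ι hι).symm.toAlgHom.comp
    (((Bialgebra.comulAlgHom K H).comp A.val).codRestrict ι.range hΔ)
  have hΔ2 : ∀ a : A, ι (Δ a) = comul (R := K) (a : H) := by
    intro a
    have := (AlgEquiv.ofInjective ι hι).apply_symm_apply
      (((Bialgebra.comulAlgHom K H).comp A.val).codRestrict ι.range hΔ a)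
    exact congrArg Subtype.val this
  let ε : A →ₐ[K] K := (Bialgebra.counitAlgHom K H).comp A.val
  have hε : ∀ a : A, ε a = counit (R := K) (a : H) := fun a => rfl
  have hr : ∀ a, contr (epsL ε) (Δ a) = a := by
    intro a
    apply Subtype.ext
    have h := congrArg (TensorProduct.rid K H) (lTensor_counit_comul (R := K) (a : H))
    rw [← hΔ2] at h
    have h3 : ∀ z : A ⊗[K] A, ((contr (epsL ε) z : A) : H) =
        TensorProduct.rid K H (LinearMap.lTensor H counit (ι z)) := by
      intro z
      induction z using TensorProduct.induction_on with
      | zero => simp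
      | add z w h h' => simp only [map_add, ← h, ← h']; rfl
      | tmul u v => simp [ι, hε, Algebra.smul_def, mul_comm]
    rw [h3, h]; simp
  have hl : ∀ a, TensorProduct.lid K A (LinearMap.rTensor A ε.toLinearMap (Δ a)) = a := by
    intro a
    apply Subtype.ext
    have h := congrArg (TensorProduct.lid K H) (rTensor_counit_comul (R := K) (a : H))
    rw [← hΔ2] at h
    have h3 : ∀ z : A ⊗[K] A,
        ((TensorProduct.lid K A (LinearMap.rTensor A ε.toLinearMap z) : A) : H) =
        TensorProduct.lid K H (LinearMap.rTensor H counit (ι z)) := by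
      intro z
      induction z using TensorProduct.induction_on with
      | zero => simp
      | add z w h h' => simp only [map_add, ← h, ← h']; rfl
      | tmul u v => simp [ι, hε]
    rw [h3, h]; simp
  let y' : A := ⟨y, hyA⟩
  have hy' : IsNilpotent y' := by
    obtain ⟨m, hm⟩ := hy
    exact ⟨m, Subtype.ext (by simpa [y'] using hm)⟩
  have hmem : y' ∈ (⨅ i : ℕ, (RingHom.ker ε) ^ i • ⊤ : Submodule A A) := by
    rw [Submodule.mem_iInf]
    intro i
    have := nilp_mem_pow Δ ε hr hl i y' hy'
    simpa using this
  obtain ⟨r, hr⟩ := (Ideal.mem_iInf_smul_pow_eq_bot_iff (RingHom.ker ε) y').1 hmem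
  have hr1 : counit (R := K) ((r : A) : H) = 0 := r.2
  refine ⟨1 - ((r : A) : H), ?_, ?_⟩
  · have := congrArg Subtype.val hr
    simp only [smul_eq_mul, y', MulMemClass.coe_mul] at this
    rw [sub_mul, this]; simp
  · rw [map_sub, hr1]; simp
end L2

section L3
open Coalgebra HopfAlgebra

theorem trans_aux (k : Type*) [Field k] (H : Type*) [CommRing H] [HopfAlgebra k H]
    (F : Type*) [Field F] [CharZero F] [Algebra k F] (π : H →ₐ[k] F)
    (x : H) (hx : IsNilpotent x) (hπ : ∀ h, h * x = 0 → π h = 0) : False := by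
  -- linear factorization
  let ℓ : H →ₗ[k] H := LinearMap.mulRight k x
  obtain ⟨ρ, hρ⟩ : ∃ ρ : H →ₗ[k] F, ∀ h, ρ (h * x) = π h := by
    let κ : (H ⧸ LinearMap.ker ℓ) →ₗ[k] F := (LinearMap.ker ℓ).liftQ π.toLinearMap
      (fun h hh => hπ h hh)
    obtain ⟨ρ, hρ⟩ := LinearMap.exists_extend (κ ∘ₗ ℓ.quotKerEquivRange.symm.toLinearMap)
    refine ⟨ρ, fun h => ?_⟩
    have := LinearMap.congr_fun hρ ⟨ℓ h, h, rfl⟩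
    have h2 : ℓ.quotKerEquivRange.symm ⟨ℓ h, h, rfl⟩ = Submodule.Quotient.mk h := by
      rw [LinearEquiv.symm_apply_eq]; rfl
    simp only [LinearMap.comp_apply, LinearEquiv.coe_coe, h2] at this
    exact this
  let φ : F ⊗[k] H →ₐ[k] F := Algebra.TensorProduct.lift (AlgHom.id k F) π (fun _ _ => mul_comm _ _)
  have hφt : ∀ u v, φ (u ⊗ₜ v) = u * π v := fun u v =>
    Algebra.TensorProduct.lift_tmul (AlgHom.id k F) π (fun _ _ => mul_comm _ _) u v
  have hφ : ∀ t : F ⊗[k] H, t * (1 ⊗ₜ x) = 0 → φ t = 0 := by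
    intro t ht
    have : ∀ t : F ⊗[k] H, φ t = LinearMap.mul' k F (LinearMap.lTensor F ρ (t * (1 ⊗ₜ x))) := by
      intro t
      induction t using TensorProduct.induction_on with
      | zero => simp
      | add z w h h' => simp only [map_add, add_mul, h, h']
      | tmul u v => simp [hφt, hρ]
    rw [this, ht]; simp
  -- translations
  let σ : H →ₐ[k] F ⊗[k] H :=
    (Algebra.TensorProduct.map π (AlgHom.id k H)).comp (Bialgebra.comulAlgHom k H)
  let σ0 : H →ₐ[k] F ⊗[k] H :=
    (Algebra.TensorProduct.map (π.comp (antipodeAlgHom k H)) (AlgHom.id k H)).comp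
      (Bialgebra.comulAlgHom k H)
  let σ' : F ⊗[k] H →ₐ[k] F ⊗[k] H :=
    Algebra.TensorProduct.lift Algebra.TensorProduct.includeLeft σ0 (fun _ _ => mul_comm _ _)
  have hσt : ∀ u v, σ' (u ⊗ₜ v) = (u ⊗ₜ 1) * σ0 v := fun u v =>
    Algebra.TensorProduct.lift_tmul _ _ _ u v
  have h1 : ∀ h, σ' (σ h) = 1 ⊗ₜ h := by
    intro h
    have hco := coassoc_symm_apply (R := k) h
    let Φ : (H ⊗[k] H) ⊗[k] H →ₗ[k] F ⊗[k] H :=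
      LinearMap.rTensor H (π.toLinearMap ∘ₗ LinearMap.mul' k H ∘ₗ LinearMap.lTensor H (antipode k))
    have h2 := congrArg Φ hco
    have h3 : ∀ z : H ⊗[k] H, Φ ((TensorProduct.assoc k H H H).symm (comul.lTensor H z)) =
        σ' (Algebra.TensorProduct.map π (AlgHom.id k H) z) := by
      intro z
      induction z using TensorProduct.induction_on with
      | zero => simp
      | add z w h h' => simp only [map_add, h, h']
      | tmul u v =>
        have h4 : ∀ w : H ⊗[k] H, Φ ((TensorProduct.assoc k H H H).symm (u ⊗ₜ w)) =
          (π u ⊗ₜ 1) * (Algebra.TensorProduct.map (π.comp (antipodeAlgHom k H)) (AlgHom.id k H)) w := by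
          intro w
          induction w using TensorProduct.induction_on with
          | zero => simp
          | add z w h h' => simp only [map_add, TensorProduct.tmul_add, mul_add, h, h']
          | tmul a b =>
            simp [Φ]
        rw [LinearMap.lTensor_tmul, h4]
        simp [hσt, σ0]
    have h5 : ∀ z : H ⊗[k] H, Φ (comul.rTensor H z) =
        LinearMap.rTensor H (Algebra.linearMap k F) (LinearMap.rTensor H counit z) := by
      intro z
      induction z using TensorProduct.induction_on with
      | zero => simp
      | add z w h h' => simp only [map_add, h, h']
      | tmul u v => simp [Φ]
    rw [h3, h5, rTensor_counit_comul] at h2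
    simpa [σ] using h2
  have h2 : ∀ s : F ⊗[k] H, φ (σ' s) = counit (R := F) s := by
    intro s
    induction s using TensorProduct.induction_on with
    | zero => simp
    | add z w h h' => simp only [map_add, h, h']
    | tmul u v =>
      have h3 : ∀ z : H ⊗[k] H, φ (Algebra.TensorProduct.map (π.comp (antipodeAlgHom k H))
          (AlgHom.id k H) z) = π (LinearMap.mul' k H ((antipode k).rTensor H z)) := by
        intro z
        induction z using TensorProduct.induction_on with
        | zero => simp
        | add z w h h' => simp only [map_add, h, h']
        | tmul a b => simp [hφt]
      have h4 : φ (σ0 v) = algebraMap k F (counit v) := by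
        have := h3 (comul v)
        rw [mul_antipode_rTensor_comul_apply] at this
        simpa [σ0] using this
      simp only [hσt, map_mul, h4, hφt]
      simp [Algebra.smul_def, mul_comm]
  obtain ⟨s, hs, hs1⟩ := exists_unit_ann (K := F) (σ x) (hx.map σ)
  have h3 := congrArg σ' hs
  rw [map_mul, h1, map_zero] at h3
  have h4 := hφ _ h3
  rw [h2, hs1] at h4
  exact one_ne_zero h4
theorem main_aux (k : Type*) [Field k] [CharZero k] (H : Type*) [CommRing H] [HopfAlgebra k H]
    (x : H) (hx : IsNilpotent x) : x = 0 := by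
  by_contra hx0
  let N : Ideal H := LinearMap.ker (LinearMap.toSpanSingleton H H x)
  have hN : ∀ h, h ∈ N ↔ h * x = 0 := fun h => by simp [N]
  have hN1 : N ≠ ⊤ := by
    intro h
    have := (hN 1).1 (h ▸ trivial)
    exact hx0 (by simpa using this)
  obtain ⟨M, hM, hNM⟩ := Ideal.exists_le_maximal N hN1
  let F := H ⧸ M
  let _ : Field F := Ideal.Quotient.field M
  let π : H →ₐ[k] F := Ideal.Quotient.mkₐ k M
  have hπ : ∀ h, h * x = 0 → π h = 0 := fun h hh =>
    Ideal.Quotient.eq_zero_iff_mem.2 (hNM ((hN h).2 hh))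
  have : CharZero F := charZero_of_injective_algebraMap (algebraMap k F).injective
  exact trans_aux k H F π x hx hπ
end L3

universe u v

theorem commutative_hopf_algebra_reduced_of_charZero
    (k : Type u) [Field k] [CharZero k] (H : Type v) [CommRing H] [HopfAlgebra k H] :
    IsReduced H := by
  exact ⟨fun x hx => main_aux k H x hx⟩
end

section
/- Let k be an algebraically closed field of characteristic 0 and let H be a commutative affine Hopf algebra over k. Then H is regular; that is, H has finite global (projective) dimension. -/
open CategoryTheory

universe w v u u' u2

/-!
STATEMENT 7:
A commutative affine Hopf algebra over an algebraically closed field of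
characteristic 0 is regular, i.e. has finite global (projective) dimension.
Finiteness of the global dimension is expressed through the vanishing of all
Ext-groups above a uniform bound.
-/

/-! ### Ext groups over an arbitrary ring -/

instance hasExtModuleCat (R : Type u) [Ring R] :
    HasExt.{max u (v + 1)} (ModuleCat.{v} R) :=
  letI := HasDerivedCategory.standard (ModuleCat.{v} R)
  hasExt_of_hasDerivedCategory _

/-- The canonical map `(X ⟶ Y) → Ext X Y 0` is additive. -/
lemma Ext_mk₀_add {C : Type*} [Category C] [Abelian C] [HasExt.{w} C] {X Y : C}
    (f g : X ⟶ Y) :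
    Abelian.Ext.mk₀ (f + g) = Abelian.Ext.mk₀ f + Abelian.Ext.mk₀ g := by
  letI := HasDerivedCategory.standard C
  ext
  rw [Abelian.Ext.add_hom, Abelian.Ext.mk₀_hom, Abelian.Ext.mk₀_hom, Abelian.Ext.mk₀_hom,
    Functor.map_add]
  dsimp [ShiftedHom.mk₀]
  rw [Preadditive.add_comp]

/-- The Ext-group `Ext_A^i (M, N)` for two left `A`-modules `M` and `N`. -/
noncomputable abbrev ExtGroup (A : Type u) [Ring A]
    (M : Type v) [AddCommGroup M] [Module A M]
    (N : Type w) [AddCommGroup N] [Module A N] (i : ℕ) :=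
  Abelian.Ext (C := ModuleCat.{max v w u} A)
    (ModuleCat.of A (ULift.{max w u} M)) (ModuleCat.of A (ULift.{max v u} N)) i


/-- A ring has finite global dimension if there is a uniform bound above which all
Ext-groups vanish. -/
def HasFiniteGlobalDimension (A : Type u) [Ring A] : Prop :=
  ∃ n : ℕ, ∀ (M N : Type u) [AddCommGroup M] [Module A M] [AddCommGroup N] [Module A N],
    ∀ i : ℕ, n < i → Subsingleton (ExtGroup A M N i)

namespace HopfReg
open IsLocalRing

lemma nzd_of_derivation {R : Type*} [CommRing R] [IsNoetherianRing R] [IsLocalRing R]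
    (hQ : ∀ n : ℕ, IsUnit ((n + 1 : ℕ) : R)) (D : Derivation ℤ R R) (x : R)
    (hx : x ∈ maximalIdeal R) (hD : IsUnit (D x)) : IsSMulRegular R x := by
  obtain ⟨u, hu⟩ := hD.exists_left_inv
  have key : ∀ (n : ℕ) (b : R), x ^ (n + 1) * b = 0 →
      ∃ c, x ^ n * b = x ^ (n + 1) * c ∧ x ^ (n + 2) * c = 0 := by
    intro n b hb
    obtain ⟨v, hv⟩ := (hQ n).exists_left_inv
    have h1 : ((n + 1 : ℕ) : R) * x ^ n * D x * b + x ^ (n + 1) * D b = 0 := by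
      have := congrArg D hb
      rw [D.leibniz, D.leibniz_pow, map_zero] at this
      simp only [smul_eq_mul, nsmul_eq_mul, Nat.add_sub_cancel] at this
      linear_combination this
    refine ⟨-(v * u * D b), ?_, ?_⟩
    · linear_combination (-x ^ n * b * v * ((n + 1 : ℕ) : R)) * hu + v * u * h1 - x ^ n * b * hv
    · linear_combination (-v * u * x) * h1 + v * u * ((n + 1 : ℕ) : R) * D x * hb
  have key2 : ∀ (a : R), x * a = 0 → ∀ n : ℕ, ∃ c, a = x ^ n * c ∧ x ^ (n + 1) * c = 0 := by
    intro a ha n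
    induction n with
    | zero => exact ⟨a, by simp, by simpa using ha⟩
    | succ n ih =>
      obtain ⟨c, hc, hc'⟩ := ih
      obtain ⟨e, he, he'⟩ := key n c hc'
      exact ⟨e, hc.trans he, he'⟩
  rw [isSMulRegular_iff_right_eq_zero_of_smul]
  intro a ha
  have : a ∈ (⨅ i : ℕ, maximalIdeal R ^ i : Ideal R) := by
    rw [Submodule.mem_iInf]
    intro n
    obtain ⟨c, hc, -⟩ := key2 a ha n
    rw [hc]
    exact Ideal.mul_mem_right _ _ (Ideal.pow_mem_pow hx n)
  rwa [Ideal.iInf_pow_eq_bot_of_isLocalRing _ (maximalIdeal.isMaximal R).ne_top] at this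

lemma weaklyRegular_of_derivations (d : ℕ) : ∀ (R : Type u) [CommRing R] [IsNoetherianRing R]
    [IsLocalRing R] (_ : ∀ n : ℕ, IsUnit ((n + 1 : ℕ) : R)) (x : Fin d → R)
    (D : Fin d → Derivation ℤ R R) (_ : ∀ i, x i ∈ maximalIdeal R)
    (_ : ∀ i, IsUnit (D i (x i))) (_ : ∀ i j, i ≠ j → D i (x j) ∈ maximalIdeal R),
    RingTheory.Sequence.IsWeaklyRegular R (List.ofFn x) := by
  induction d with
  | zero => intro R _ _ _ _ x D _ _ _; simp
  | succ d ih =>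
    intro R _ _ _ hQ x D hx hD hD'
    rw [List.ofFn_succ, RingTheory.Sequence.isWeaklyRegular_cons_iff']
    refine ⟨nzd_of_derivation hQ (D 0) _ (hx 0) (hD 0), ?_⟩
    set I := Ideal.span {x 0} with hI
    have hIm : I ≤ maximalIdeal R := by
      rw [hI, Ideal.span_singleton_le_iff_mem]; exact hx 0
    have : Nontrivial (R ⧸ I) := Ideal.Quotient.nontrivial_iff.mpr
      (fun h => (maximalIdeal.isMaximal R).ne_top (top_le_iff.mp (h ▸ hIm)))
    have hsurj : Function.Surjective (Ideal.Quotient.mk I) := Ideal.Quotient.mk_surjective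
    have : IsLocalRing (R ⧸ I) := .of_surjective' _ hsurj
    have hmax : ∀ y ∈ maximalIdeal R, Ideal.Quotient.mk I y ∈ maximalIdeal (R ⧸ I) := by
      intro y hy
      have : IsLocalHom (Ideal.Quotient.mk I) := IsLocalHom.of_surjective _ hsurj
      exact fun h => hy (isUnit_of_map_unit _ _ h)
    obtain ⟨u, hu⟩ := (hD 0).exists_left_inv
    let E : Fin d → Derivation ℤ R R := fun i => D i.succ - (D i.succ (x 0) * u) • D 0
    have hE0 : ∀ i, E i (x 0) = 0 := by
      intro i
      simp only [E, Derivation.sub_apply, Derivation.smul_apply, smul_eq_mul]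
      linear_combination (- D i.succ (x 0)) * hu
    have hEk : ∀ i a, (Ideal.Quotient.mk I).toIntAlgHom a = 0 →
        (Ideal.Quotient.mk I).toIntAlgHom (E i a) = 0 := by
      intro i a ha
      change Ideal.Quotient.mk I a = 0 at ha
      change Ideal.Quotient.mk I _ = 0
      rw [Ideal.Quotient.eq_zero_iff_mem] at ha ⊢
      rw [hI, Ideal.mem_span_singleton'] at ha
      obtain ⟨c, rfl⟩ := ha
      rw [Derivation.leibniz, hE0, smul_zero, zero_add, smul_eq_mul]
      exact Ideal.mul_mem_right _ _ (Ideal.mem_span_singleton_self _)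
    let F : Fin d → Derivation ℤ (R ⧸ I) (R ⧸ I) := fun i =>
      Derivation.liftOfSurjective (f := (Ideal.Quotient.mk I).toIntAlgHom) hsurj (hEk i)
    have hF : ∀ i a, F i (Ideal.Quotient.mk I a) = Ideal.Quotient.mk I (E i a) := fun i a =>
      Derivation.liftOfSurjective_apply (f := (Ideal.Quotient.mk I).toIntAlgHom) hsurj (hEk i) a
    have hcorr : ∀ i j : Fin d, (D i.succ (x 0) * u) * D 0 (x j.succ) ∈ maximalIdeal R :=
      fun i j => Ideal.mul_mem_left _ _ (hD' _ _ (Fin.succ_ne_zero j).symm)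
    have h := ih (R ⧸ I) (fun n => by simpa using (hQ n).map (Ideal.Quotient.mk I))
      (fun i => Ideal.Quotient.mk I (x i.succ)) F (fun i => hmax _ (hx _))
      (fun i => by
        refine (congrArg IsUnit (hF i (x i.succ))).mpr ?_
        refine IsUnit.map _ ?_
        by_contra hcon
        have : E i (x i.succ) ∈ maximalIdeal R := hcon
        have h2 := Ideal.add_mem _ this (hcorr i i)
        simp only [E, Derivation.sub_apply, Derivation.smul_apply, smul_eq_mul,
          sub_add_cancel] at h2
        exact h2 (hD i.succ))
      (fun i j hij => by
        refine (congrArg (· ∈ maximalIdeal (R ⧸ I)) (hF i (x j.succ))).mpr ?_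
        refine hmax _ (Ideal.sub_mem _ (hD' _ _ (fun h => hij (Fin.succ_injective _ h))) ?_)
        simpa using! hcorr i j)
    rw [List.map_ofFn]
    let e : QuotSMulTop (x 0) R ≃+ (R ⧸ I) :=
      (Submodule.quotEquivOfEq _ _ (by
        rw [hI]
        ext y
        simp [Submodule.mem_smul_pointwise_iff_exists, Ideal.mem_span_singleton', mul_comm])).toAddEquiv
    refine (AddEquiv.isWeaklyRegular_congr (e := e) ?_).mpr h
    refine List.forall₂_same.mpr fun r _ y => ?_
    obtain ⟨r, rfl⟩ := hsurj r
    obtain ⟨y, rfl⟩ := Submodule.Quotient.mk_surjective _ y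
    rfl

end HopfReg

namespace HopfReg
open IsLocalRing TensorProduct

lemma exists_derivation {k : Type u'} [Field k] {H : Type u} [CommRing H] [HopfAlgebra k H]
    (δ : H →ₗ[k] k)
    (hδ : ∀ a b, δ (a * b) = Coalgebra.counit (R := k) a * δ b + δ a * Coalgebra.counit (R := k) b) :
    ∃ D : Derivation ℤ H H, ∀ h, Coalgebra.counit (R := k) (D h) = δ h := by
  let T : (H →ₗ[k] k) → H ⊗[k] H →ₗ[k] H := fun f =>
    (TensorProduct.rid k H).toLinearMap ∘ₗ LinearMap.lTensor H f
  have hT : ∀ f a b, T f (a ⊗ₜ b) = f b • a := fun f a b => by simp [T]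
  have hTm : ∀ x y : H ⊗[k] H, T δ (x * y) =
      T Coalgebra.counit x * T δ y + T Coalgebra.counit y * T δ x := by
    intro x y
    induction x with
    | zero => simp
    | add x x' hx hx' => rw [add_mul, map_add, map_add, map_add, hx, hx']; ring
    | tmul a b =>
      induction y with
      | zero => simp
      | add x x' hx hx' => rw [mul_add, map_add, map_add, map_add, hx, hx']; ring
      | tmul c d =>
        rw [Algebra.TensorProduct.tmul_mul_tmul, hT, hT, hT, hT, hT, hδ]
        simp only [Algebra.smul_def, map_add, map_mul]
        ring
  have hE : ∀ h : H, T Coalgebra.counit (Coalgebra.comul (R := k) h) = h := by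
    intro h
    simp [T]
  have hs : ∀ z : H ⊗[k] H, Coalgebra.counit (R := k) (T δ z) =
      δ (TensorProduct.lid k H (LinearMap.rTensor H (Coalgebra.counit (R := k)) z)) := by
    intro z
    induction z with
    | zero => simp
    | add x y hx hy => simp only [map_add, hx, hy]
    | tmul a b => rw [hT]; simp [mul_comm]
  refine ⟨Derivation.mk' ((T δ).toAddMonoidHom.comp
    (Coalgebra.comul (R := k) (A := H)).toAddMonoidHom).toIntLinearMap ?_, ?_⟩
  · intro a b
    change T δ (Coalgebra.comul (R := k) (a * b)) = a • T δ (Coalgebra.comul (R := k) b) +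
      b • T δ (Coalgebra.comul (R := k) a)
    rw [Bialgebra.comul_mul, hTm, hE, hE, smul_eq_mul, smul_eq_mul]
  · intro h
    change Coalgebra.counit (R := k) (T δ (Coalgebra.comul (R := k) h)) = δ h
    rw [hs]
    simp

lemma exists_derivation_localization {H : Type u} [CommRing H] (M : Submonoid H) (R : Type v)
    [CommRing R] [Algebra H R] [IsLocalization M R] (D : Derivation ℤ H H) :
    ∃ D' : Derivation ℤ R R, ∀ h, D' (algebraMap H R h) = algebraMap H R (D h) := by
  let φ : H →+* TrivSqZeroExt R R :=
    { toFun := fun h => TrivSqZeroExt.inl (algebraMap H R h) +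
        TrivSqZeroExt.inr (algebraMap H R (D h))
      map_one' := by ext <;> simp
      map_zero' := by ext <;> simp
      map_add' := fun a b => by ext <;> simp [Algebra.smul_def]
      map_mul' := fun a b => by
        ext <;> simp only [TrivSqZeroExt.snd_add, TrivSqZeroExt.fst_add, TrivSqZeroExt.snd_mul, TrivSqZeroExt.fst_mul, TrivSqZeroExt.snd_inl,
          TrivSqZeroExt.snd_inr, TrivSqZeroExt.fst_inl, TrivSqZeroExt.fst_inr, op_smul_eq_smul, smul_eq_mul, map_add, map_mul, Derivation.leibniz, zero_add, add_zero] }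
  have hφ1 : ∀ h, (φ h).fst = algebraMap H R h := fun h => by simp [φ]
  have hφ2 : ∀ h, (φ h).snd = algebraMap H R (D h) := fun h => zero_add _
  have hu : ∀ y : M, IsUnit (φ y) := fun y => by
    rw [TrivSqZeroExt.isUnit_iff_isUnit_fst, hφ1]
    exact IsLocalization.map_units R y
  let g : R →+* TrivSqZeroExt R R := IsLocalization.lift hu
  have hg : ∀ h, g (algebraMap H R h) = φ h := fun h => IsLocalization.lift_eq hu h
  have hfst : ∀ r, (g r).fst = r := by
    have : ((TrivSqZeroExt.fstHom ℤ R R).toRingHom.comp g) = RingHom.id R := by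
      apply IsLocalization.ringHom_ext M
      ext h
      change (g (algebraMap H R h)).fst = _
      rw [hg, hφ1]; rfl
    intro r
    exact congrArg (fun f : R →+* R => f r) this
  refine ⟨Derivation.mk' (AddMonoidHom.toIntLinearMap
    { toFun := fun r => (g r).snd, map_zero' := by simp, map_add' := by simp }) ?_, ?_⟩
  · intro a b
    change (g (a * b)).snd = a • (g b).snd + b • (g a).snd
    rw [map_mul, TrivSqZeroExt.snd_mul, hfst, hfst]
    simp [mul_comm]
  · intro h
    change (g (algebraMap H R h)).snd = _
    rw [hg, hφ2]

end HopfReg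

namespace HopfReg
open IsLocalRing TensorProduct

lemma exists_coords {k : Type u'} [Field k] {H : Type u} [CommRing H] [HopfAlgebra k H]
    [IsNoetherianRing H] :
    ∃ (d : ℕ) (x : Fin d → H) (δ : Fin d → (H →ₗ[k] k)),
      (∀ i a b, δ i (a * b) = Coalgebra.counit (R := k) a * δ i b +
        δ i a * Coalgebra.counit (R := k) b) ∧
      (∀ i, x i ∈ RingHom.ker (Bialgebra.counitAlgHom k H)) ∧
      (∀ i j, δ i (x j) = if i = j then 1 else 0) ∧
      RingHom.ker (Bialgebra.counitAlgHom k H) ≤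
        Ideal.span (Set.range x) ⊔ RingHom.ker (Bialgebra.counitAlgHom k H) ^ 2 := by
  set ε := Bialgebra.counitAlgHom k H with hε
  set m := RingHom.ker ε with hm
  have hmem : ∀ h : H, h - algebraMap k H (ε h) ∈ m := fun h => by
    rw [hm, RingHom.mem_ker, map_sub, AlgHom.commutes]; simp
  have hsm : ∀ (h : H) (v : m.Cotangent), h • v = ε h • v := by
    intro h v
    obtain ⟨v, rfl⟩ := m.toCotangent_surjective v
    rw [← algebraMap_smul H (ε h), ← sub_eq_zero, ← sub_smul, ← map_smul, Ideal.toCotangent_eq_zero]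
    simpa [pow_two] using Ideal.mul_mem_mul (hmem h) v.2
  have : Module.Finite k m.Cotangent := by
    have hf : Module.Finite H m.Cotangent :=
      Module.Finite.of_surjective m.toCotangent m.toCotangent_surjective
    obtain ⟨s, hs⟩ := hf.fg_top
    refine ⟨s, ?_⟩
    rw [eq_top_iff]
    rintro v -
    have hv : v ∈ Submodule.span H (s : Set m.Cotangent) := hs ▸ Submodule.mem_top
    induction hv using Submodule.span_induction with
    | mem x h => exact Submodule.subset_span h
    | zero => exact zero_mem _
    | add x y _ _ hx hy => exact add_mem hx hy
    | smul a x _ hx => rw [hsm]; exact Submodule.smul_mem _ _ hx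
  let b := Module.finBasis k m.Cotangent
  choose x hx using fun i => m.toCotangent_surjective (b i)
  let π : H →ₗ[k] m.Cotangent :=
    { toFun := fun h => m.toCotangent ⟨h - algebraMap k H (ε h), hmem h⟩
      map_add' := fun a b => by
        rw [← map_add]; congr 1; ext; simp; ring
      map_smul' := fun c a => by
        rw [RingHom.id_apply, ← algebraMap_smul H c (m.toCotangent _), ← map_smul]
        congr 1; ext; simp [Algebra.smul_def]; ring }
  have hπ : ∀ y (hy : y ∈ m), π y = m.toCotangent ⟨y, hy⟩ := by
    intro y hy
    change m.toCotangent _ = _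
    congr 1; ext
    have : ε y = 0 := hy
    simp [this]
  have hπm : ∀ a c, π (a * c) = ε a • π c + ε c • π a := by
    intro a c
    rw [← algebraMap_smul H (ε a), ← algebraMap_smul H (ε c)]
    change m.toCotangent _ = _ • m.toCotangent _ + _ • m.toCotangent _
    rw [← map_smul, ← map_smul, ← map_add, Ideal.toCotangent_eq, pow_two]
    convert Ideal.mul_mem_mul (hmem a) (hmem c) using 1
    simp [Algebra.smul_def]
    ring
  refine ⟨_, fun i => (x i : H), fun i => b.coord i ∘ₗ π, ?_, fun i => (x i).2, ?_, ?_⟩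
  · intro i a c
    change b.coord i (π (a * c)) = ε a * b.coord i (π c) + b.coord i (π a) * ε c
    rw [hπm, map_add, map_smul, map_smul, smul_eq_mul, smul_eq_mul, mul_comm (ε c)]
  · intro i j
    rw [LinearMap.comp_apply, hπ _ (x j).2, Subtype.coe_eta, hx, Module.Basis.coord_apply,
      Module.Basis.repr_self, Finsupp.single_apply]
    simp only [eq_comm]
  · intro y hy
    have h1 := b.sum_repr (m.toCotangent ⟨y, hy⟩)
    have h2 : m.toCotangent (∑ i, algebraMap k H (b.repr (m.toCotangent ⟨y, hy⟩) i) • x i) =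
        m.toCotangent ⟨y, hy⟩ := by
      conv_rhs => rw [← h1]
      rw [map_sum]
      refine Finset.sum_congr rfl fun i _ => ?_
      rw [map_smul, hx, algebraMap_smul]
    have h3 := (Ideal.toCotangent_eq m).mp h2.symm
    rw [← sub_add_cancel y (((∑ i, algebraMap k H (b.repr (m.toCotangent ⟨y, hy⟩) i) • x i : m)) : H),
      add_comm]
    refine Submodule.add_mem_sup ?_ h3
    rw [AddSubmonoidClass.coe_finsetSum]
    refine sum_mem fun i _ => ?_
    exact Ideal.mul_mem_left _ _ (Ideal.subset_span ⟨i, rfl⟩)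

lemma locSubsingleton {H : Type u} [CommRing H] (X : ModuleCat.{u} H) (S : Submonoid H)
    (h : ∀ z : X, ∃ r ∈ S, r • z = 0) : Subsingleton (X.localizedModule S) :=
  (IsLocalizedModule.subsingleton_iff S (X.localizedModuleMkLinearMap S)).mpr h

lemma locEquiv {H : Type u} [CommRing H] (X : ModuleCat.{u} H) (S : Submonoid H)
    (Q : Type u) [AddCommGroup Q] [Module H Q] [Module (Localization S) Q]
    [IsScalarTower H (Localization S) Q] (f : X →ₗ[H] Q) [IsLocalizedModule S f] (d : ℕ)
    (hd : HasProjectiveDimensionLE (ModuleCat.of.{u} (Localization S) Q) d) :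
    HasProjectiveDimensionLE (X.localizedModule S) d := by
  let e1 : (X.localizedModule S) ≃ₗ[H] Q :=
    IsLocalizedModule.linearEquiv S (X.localizedModuleMkLinearMap S) f
  let e2 : (X.localizedModule S) ≃ₗ[Localization S] (ModuleCat.of.{u} (Localization S) Q) :=
    e1.extendScalarsOfIsLocalization S (Localization S)
  exact ModuleCat.hasProjectiveDimensionLE_of_linearEquiv e2.symm d

lemma pd_residue {k : Type u'} [Field k] [CharZero k] {H : Type u} [CommRing H] [HopfAlgebra k H]
    [IsNoetherianRing H] :
    ∃ n : ℕ, HasProjectiveDimensionLE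
      (ModuleCat.of.{u} H (H ⧸ RingHom.ker (Bialgebra.counitAlgHom k H))) n := by
  obtain ⟨d, x, δ, hδ, hx, hδx, hgen⟩ := exists_coords (k := k) (H := H)
  choose D hD using fun i => exists_derivation (δ i) (hδ i)
  set ε := Bialgebra.counitAlgHom k H with hε
  set m := RingHom.ker ε with hm
  have hmax : m.IsMaximal := RingHom.ker_isMaximal_of_surjective ε
    (fun c => ⟨algebraMap k H c, by simp⟩)
  refine ⟨d, (ModuleCat.hasProjectiveDimensionLE_iff_forall_maximalSpectrum d _).mpr ?_⟩
  intro n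
  by_cases hn : n.1 = m
  · obtain ⟨n, hn'⟩ := n
    dsimp only at hn ⊢
    subst hn
    have hprime : m.IsPrime := hmax.isPrime
    let R := Localization m.primeCompl
    have : IsLocalRing R := Localization.AtPrime.isLocalRing m
    have : IsLocalization.AtPrime R m := inferInstanceAs (IsLocalization m.primeCompl R)
    have : IsNoetherianRing R := IsLocalization.isNoetherianRing m.primeCompl R inferInstance
    have hmR : m.map (algebraMap H R) = maximalIdeal R :=
      Localization.AtPrime.map_eq_maximalIdeal
    have hunit : ∀ h : H, ε h ≠ 0 → IsUnit (algebraMap H R h) := fun h hh =>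
      IsLocalization.map_units R (⟨h, hh⟩ : m.primeCompl)
    have hmemR : ∀ h : H, ε h = 0 → algebraMap H R h ∈ maximalIdeal R := fun h hh =>
      hmR ▸ Ideal.mem_map_of_mem _ hh
    choose D' hD' using fun i => exists_derivation_localization m.primeCompl R (D i)
    have hεD : ∀ i j, ε (D i (x j)) = if i = j then 1 else 0 := fun i j =>
      (hD i (x j)).trans (hδx i j)
    have hreg := weaklyRegular_of_derivations d R
      (fun j => by
        have := hunit ((j + 1 : ℕ) : H) (by rw [map_natCast]; exact Nat.cast_ne_zero.mpr (by simp))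
        rwa [map_natCast] at this)
      (fun i => algebraMap H R (x i)) D' (fun i => hmemR _ (hx i))
      (fun i => by rw [hD']; exact hunit _ (by rw [hεD]; simp))
      (fun i j hij => by rw [hD']; exact hmemR _ (by rw [hεD]; simp [hij]))
    have hpd := ModuleCat.projectiveDimension_quotient_eq_add_length_of_isWeaklyRegular
      (ModuleCat.of.{u} R R) _ hreg (by
        intro r hr
        rw [List.mem_ofFn] at hr
        obtain ⟨i, rfl⟩ := hr
        exact hmemR _ (hx i))
    have hspan : Ideal.ofList (List.ofFn fun i => algebraMap H R (x i)) = maximalIdeal R := by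
      have h0 : Ideal.ofList (List.ofFn fun i => algebraMap H R (x i)) =
          (Ideal.span (Set.range x)).map (algebraMap H R) := by
        rw [Ideal.map_span, Ideal.ofList]
        congr 1
        ext y
        simp [List.mem_ofFn]
      rw [h0]
      apply le_antisymm
      · rw [← hmR]
        apply Ideal.map_mono
        rw [Ideal.span_le]
        rintro _ ⟨i, rfl⟩
        exact hx i
      · apply Submodule.le_of_le_smul_of_le_jacobson_bot (I := maximalIdeal R)
          (maximalIdeal R).fg_of_isNoetherianRing (IsLocalRing.maximalIdeal_le_jacobson _)
        have := Ideal.map_mono (f := algebraMap H R) hgen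
        rwa [Ideal.map_sup, Ideal.map_pow, hmR, pow_two] at this
    have hpd' : HasProjectiveDimensionLE (ModuleCat.of.{u} R
        (R ⧸ Ideal.ofList (List.ofFn fun i => algebraMap H R (x i)) • (⊤ : Submodule R R))) d := by
      rw [← projectiveDimension_le_iff]
      refine hpd.le.trans ?_
      rw [ModuleCat.projectiveDimension_eq_zero_of_projective]
      simp
    have heq : m.localized' R m.primeCompl (Algebra.linearMap H R) =
        Ideal.ofList (List.ofFn fun i => algebraMap H R (x i)) • (⊤ : Submodule R R) := by
      rw [hspan, ← hmR, Ideal.localized'_eq_map]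
      simp
    have hpd2 : HasProjectiveDimensionLE (ModuleCat.of.{u} R
        (R ⧸ m.localized' R m.primeCompl (Algebra.linearMap H R))) d := by
      rw [heq]; exact hpd'
    exact locEquiv (ModuleCat.of.{u} H (H ⧸ m)) m.primeCompl
      (R ⧸ m.localized' R m.primeCompl (Algebra.linearMap H R))
      (m.toLocalizedQuotient' R m.primeCompl (Algebra.linearMap H R)) d hpd2
  · have hsub : Subsingleton ((ModuleCat.of.{u} H (H ⧸ m)).localizedModule n.1.primeCompl) := by
      have : ∃ y ∈ m, y ∉ n.1 := by
        by_contra! hcon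
        exact hn (hmax.eq_of_le n.2.ne_top hcon).symm
      obtain ⟨y, hy, hyn⟩ := this
      refine locSubsingleton _ _ ?_
      intro z
      obtain ⟨z, rfl⟩ := Ideal.Quotient.mk_surjective z
      refine ⟨y, hyn, ?_⟩
      exact Ideal.Quotient.eq_zero_iff_mem.mpr (Ideal.mul_mem_right z m hy)
    have hz : Limits.IsZero ((ModuleCat.of.{u} H (H ⧸ m)).localizedModule n.1.primeCompl) :=
      ModuleCat.isZero_of_subsingleton _
    have := hz.hasProjectiveDimensionLT_zero
    exact hasProjectiveDimensionLT_of_ge _ 0 (d + 1) (by simp)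

end HopfReg

namespace HopfReg
open IsLocalRing TensorProduct

lemma claim1 {k : Type u'} [Field k] {H : Type u} [CommRing H] [HopfAlgebra k H] (h : H)
    (Q : H ⊗[k] H →ₗ[k] H ⊗[k] H)
    (hQ : ∀ a b, Q (a ⊗ₜ b) = (a ⊗ₜ[k] (1 : H)) * Coalgebra.comul (R := k) b) :
    Q ((HopfAlgebra.antipode k (A := H)).rTensor H (Coalgebra.comul (R := k) h)) = 1 ⊗ₜ h := by
  have e : Q ∘ₗ (HopfAlgebra.antipode k (A := H)).rTensor H =
      (LinearMap.mul' k H ∘ₗ (HopfAlgebra.antipode k (A := H)).rTensor H).rTensor H ∘ₗ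
      (TensorProduct.assoc k H H H).symm.toLinearMap ∘ₗ
      (Coalgebra.comul (R := k) (A := H)).lTensor H := by
    ext a b
    simp only [AlgebraTensorModule.curry_apply, LinearMap.restrictScalars_self, curry_apply,
      LinearMap.comp_apply, LinearMap.rTensor_tmul, hQ, LinearMap.lTensor_tmul,
      LinearEquiv.coe_coe]
    generalize Coalgebra.comul (R := k) b = w
    induction w with
    | zero => simp
    | add x y hx hy => simp only [mul_add, tmul_add, map_add, hx, hy]
    | tmul x y => simp
  have := LinearMap.congr_fun e (Coalgebra.comul (R := k) h)
  simp only [LinearMap.comp_apply, LinearEquiv.coe_coe] at this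
  rw [this, Coalgebra.coassoc_symm_apply, ← LinearMap.comp_apply, ← LinearMap.rTensor_comp,
    LinearMap.comp_assoc, HopfAlgebra.mul_antipode_rTensor_comul, LinearMap.rTensor_comp,
    LinearMap.comp_apply, Coalgebra.rTensor_counit_comul]
  simp

lemma claim2 {k : Type u'} [Field k] {H : Type u} [CommRing H] [HopfAlgebra k H] (h : H)
    (Q : H ⊗[k] H →ₗ[k] H ⊗[k] H)
    (hQ : ∀ a b, Q (a ⊗ₜ b) = (a ⊗ₜ[k] (1 : H)) *
      (HopfAlgebra.antipode k (A := H)).rTensor H (Coalgebra.comul (R := k) b)) :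
    Q (Coalgebra.comul (R := k) h) = 1 ⊗ₜ h := by
  have e : Q =
      (LinearMap.mul' k H ∘ₗ (HopfAlgebra.antipode k (A := H)).lTensor H).rTensor H ∘ₗ
      (TensorProduct.assoc k H H H).symm.toLinearMap ∘ₗ
      (Coalgebra.comul (R := k) (A := H)).lTensor H := by
    ext a b
    simp only [AlgebraTensorModule.curry_apply, LinearMap.restrictScalars_self, curry_apply,
      LinearMap.comp_apply, LinearMap.rTensor_tmul, hQ, LinearMap.lTensor_tmul,
      LinearEquiv.coe_coe]
    generalize Coalgebra.comul (R := k) b = w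
    induction w with
    | zero => simp
    | add x y hx hy => simp only [mul_add, tmul_add, map_add, hx, hy]
    | tmul x y => simp
  rw [e]
  simp only [LinearMap.comp_apply, LinearEquiv.coe_coe]
  rw [Coalgebra.coassoc_symm_apply, ← LinearMap.comp_apply, ← LinearMap.rTensor_comp,
    LinearMap.comp_assoc, HopfAlgebra.mul_antipode_lTensor_comul, LinearMap.rTensor_comp,
    LinearMap.comp_apply, Coalgebra.rTensor_counit_comul]
  simp

section G
variable (k : Type u') [Field k] (H : Type u) [CommRing H] [HopfAlgebra k H]
variable (M : Type u) [AddCommGroup M] [Module k M] [Module H M] [IsScalarTower k H M]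
variable (X : Type u) [AddCommGroup X] [Module k X] [Module H X] [IsScalarTower k H X]

noncomputable def act : H ⊗[k] H →ₐ[k] Module.End k (M ⊗[k] X) :=
  (Module.endTensorEndAlgHom (R := k) (A := k) (M := M) (N := X)).comp
    (Algebra.TensorProduct.map (Algebra.lsmul k k M) (Algebra.lsmul k k X))

@[simp] lemma act_tmul (a b : H) (m : M) (x : X) :
    act k H M X (a ⊗ₜ b) (m ⊗ₜ x) = (a • m) ⊗ₜ (b • x) := by
  simp [act, Module.endTensorEndAlgHom]

def G (k : Type u') [Field k] (H : Type u) [CommRing H] [HopfAlgebra k H]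
  (M : Type u) [AddCommGroup M] [Module k M]
  (X : Type u) [AddCommGroup X] [Module k X] : Type u := M ⊗[k] X

noncomputable instance : AddCommGroup (G k H M X) := inferInstanceAs (AddCommGroup (M ⊗[k] X))
noncomputable instance : Module k (G k H M X) := inferInstanceAs (Module k (M ⊗[k] X))

noncomputable instance instModG : Module H (G k H M X) :=
  Module.compHom (M ⊗[k] X) (((act k H M X).comp (Bialgebra.comulAlgHom k H)).toRingHom)

noncomputable def toG : M ⊗[k] X ≃ₗ[k] G k H M X := LinearEquiv.refl k _

lemma smul_toG (h : H) (t : M ⊗[k] X) :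
    h • toG k H M X t = toG k H M X (act k H M X (Coalgebra.comul (R := k) h) t) := rfl

instance : IsScalarTower k H (G k H M X) := ⟨fun c h t => by
  obtain ⟨t, rfl⟩ := (toG k H M X).surjective t
  simp only [smul_toG, map_smul, LinearMap.smul_apply]⟩

variable {X} {Y : Type u} [AddCommGroup Y] [Module k Y] [Module H Y] [IsScalarTower k H Y]

lemma act_natural (f : X →ₗ[H] Y) (w : H ⊗[k] H) (t : M ⊗[k] X) :
    (f.restrictScalars k).lTensor M (act k H M X w t) =
      act k H M Y w ((f.restrictScalars k).lTensor M t) := by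
  induction w with
  | zero => simp
  | add x y hx hy => simp only [map_add, LinearMap.add_apply, hx, hy]
  | tmul a b =>
    induction t with
    | zero => simp
    | add x y hx hy => simp only [map_add, hx, hy]
    | tmul m x => simp

noncomputable def Gmap (f : X →ₗ[H] Y) : G k H M X →ₗ[H] G k H M Y :=
  { toFun := fun t => toG k H M Y ((f.restrictScalars k).lTensor M ((toG k H M X).symm t))
    map_add' := fun a b => by simp only [map_add]
    map_smul' := fun h t => by
      obtain ⟨t, rfl⟩ := (toG k H M X).surjective t
      simp only [smul_toG, LinearEquiv.symm_apply_apply, act_natural, RingHom.id_apply] }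

lemma Gmap_toG (f : X →ₗ[H] Y) (t : M ⊗[k] X) :
    Gmap k H M f (toG k H M X t) = toG k H M Y ((f.restrictScalars k).lTensor M t) := rfl

end G
end HopfReg

namespace HopfReg
open IsLocalRing TensorProduct

section G2
variable (k : Type u') [Field k] (H : Type u) [CommRing H] [HopfAlgebra k H]
variable (M : Type u) [AddCommGroup M] [Module k M] [Module H M] [IsScalarTower k H M]

/-- The linear map `a ⊗ b ↦ b ⊗ (am ⊗ v)`, bilinear in `m`, `v`. -/
noncomputable def Tmap (V : Type u) [AddCommGroup V] [Module k V] :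
    H ⊗[k] H →ₗ[k] (M ⊗[k] V) →ₗ[k] H ⊗[k] (M ⊗[k] V) :=
  TensorProduct.lift (LinearMap.mk₂ k
    (fun a b => (TensorProduct.mk k H (M ⊗[k] V) b) ∘ₗ (Algebra.lsmul k k M a).rTensor V)
    (fun a a' b => by ext; simp [tmul_add])
    (fun c a b => by ext; simp [← smul_tmul', tmul_smul])
    (fun a b b' => by ext; simp)
    (fun c a b => by ext; simp [smul_tmul']))

lemma Tmap_tmul (V : Type u) [AddCommGroup V] [Module k V] (a b : H) (m : M) (v : V) :
    Tmap k H M V (a ⊗ₜ b) (m ⊗ₜ v) = b ⊗ₜ ((a • m) ⊗ₜ v) := by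
  simp [Tmap]

noncomputable def jmap (V : Type u) [AddCommGroup V] [Module k V] :
    H ⊗[k] (M ⊗[k] V) →ₗ[H] G k H M (H ⊗[k] V) :=
  LinearMap.liftBaseChange H
    ((toG k H M (H ⊗[k] V)).toLinearMap ∘ₗ (TensorProduct.mk k H V 1).lTensor M)

lemma jmap_tmul (V : Type u) [AddCommGroup V] [Module k V] (h : H) (m : M) (v : V) :
    jmap k H M V (h ⊗ₜ (m ⊗ₜ v)) = toG k H M (H ⊗[k] V)
      (act k H M _ (Coalgebra.comul (R := k) h) (m ⊗ₜ (1 ⊗ₜ v))) := by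
  rw [← smul_toG]
  simp [jmap]

noncomputable def imap (V : Type u) [AddCommGroup V] [Module k V] :
    M ⊗[k] (H ⊗[k] V) →ₗ[k] H ⊗[k] (M ⊗[k] V) :=
  TensorProduct.lift (Tmap k H M V ∘ₗ (HopfAlgebra.antipode k (A := H)).rTensor H ∘ₗ
    Coalgebra.comul (R := k)) ∘ₗ (TensorProduct.leftComm k M H V).toLinearMap

lemma imap_tmul (V : Type u) [AddCommGroup V] [Module k V] (h : H) (m : M) (v : V) :
    imap k H M V (m ⊗ₜ (h ⊗ₜ v)) = Tmap k H M V
      ((HopfAlgebra.antipode k (A := H)).rTensor H (Coalgebra.comul (R := k) h)) (m ⊗ₜ v) := by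
  simp [imap]

lemma act_mul_one (V : Type u) [AddCommGroup V] [Module k V] (m : M) (v : V) (w : H ⊗[k] H) :
    (jmap k H M V (Tmap k H M V w (m ⊗ₜ v))) = toG k H M _ (act k H M (H ⊗[k] V)
      ((LinearMap.mul' k (H ⊗[k] H) ∘ₗ TensorProduct.map ((TensorProduct.mk k H H).flip 1)
        (Coalgebra.comul (R := k))) w) (m ⊗ₜ (1 ⊗ₜ v))) := by
  induction w with
  | zero => simp
  | add x y hx hy => simp only [map_add, LinearMap.add_apply, hx, hy]
  | tmul a b =>
    rw [Tmap_tmul, jmap_tmul]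
    congr 1
    simp only [LinearMap.comp_apply, TensorProduct.map_tmul, LinearMap.mul'_apply,
      LinearMap.flip_apply, TensorProduct.mk_apply]
    rw [mul_comm, map_mul, Module.End.mul_apply, act_tmul, one_smul]

lemma imap_act (V : Type u) [AddCommGroup V] [Module k V] (m : M) (v : V) (w : H ⊗[k] H) :
    imap k H M V (act k H M (H ⊗[k] V) w (m ⊗ₜ (1 ⊗ₜ v))) = Tmap k H M V
      ((LinearMap.mul' k (H ⊗[k] H) ∘ₗ TensorProduct.map ((TensorProduct.mk k H H).flip 1)
        ((HopfAlgebra.antipode k (A := H)).rTensor H ∘ₗ Coalgebra.comul (R := k))) w)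
        (m ⊗ₜ v) := by
  induction w with
  | zero => simp
  | add x y hx hy => simp only [map_add, LinearMap.add_apply, hx, hy]
  | tmul a b =>
    rw [act_tmul, smul_tmul', smul_eq_mul, mul_one, imap_tmul]
    simp only [LinearMap.comp_apply, TensorProduct.map_tmul, LinearMap.mul'_apply,
      LinearMap.flip_apply, TensorProduct.mk_apply]
    generalize (HopfAlgebra.antipode k (A := H)).rTensor H (Coalgebra.comul (R := k) b) = w
    induction w with
    | zero => simp
    | add x y hx hy => simp only [mul_add, map_add, LinearMap.add_apply, hx, hy]
    | tmul c d => simp [Tmap_tmul, mul_smul, smul_comm a c]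

lemma projective_G_free (V : Type u) [AddCommGroup V] [Module k V] :
    Module.Projective H (G k H M (H ⊗[k] V)) := by
  have hji : ∀ t, jmap k H M V (imap k H M V t) = toG k H M _ t := by
    intro t
    induction t with
    | zero => simp
    | add x y hx hy => simp only [map_add, hx, hy]
    | tmul m t =>
      induction t with
      | zero => simp
      | add x y hx hy => simp only [tmul_add, map_add, hx, hy]
      | tmul h v =>
        rw [imap_tmul, act_mul_one, claim1 h _ (fun a b => by simp), act_tmul, one_smul,
          smul_tmul', smul_eq_mul, mul_one]
  have hij : ∀ t, imap k H M V ((toG k H M _).symm (jmap k H M V t)) = t := by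
    intro t
    induction t with
    | zero => simp
    | add x y hx hy => simp only [map_add, hx, hy]
    | tmul h t =>
      induction t with
      | zero => simp
      | add x y hx hy => simp only [tmul_add, map_add, hx, hy]
      | tmul m v =>
        rw [jmap_tmul, LinearEquiv.symm_apply_apply, imap_act, claim2 h _ (fun a b => by simp),
          Tmap_tmul, one_smul]
  have hb : Function.Bijective (jmap k H M V) := by
    constructor
    · intro a b hab
      rw [← hij a, hab, hij]
    · intro t
      exact ⟨imap k H M V ((toG k H M _).symm t), by rw [hji, LinearEquiv.apply_symm_apply]⟩
  exact Module.Projective.of_equiv (LinearEquiv.ofBijective _ hb)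

variable (X : Type u) [AddCommGroup X] [Module k X] [Module H X] [IsScalarTower k H X]

lemma projective_G [Module.Projective H X] : Module.Projective H (G k H M X) := by
  let p : H ⊗[k] X →ₗ[H] X := LinearMap.liftBaseChange H LinearMap.id
  obtain ⟨s, hs⟩ := Module.projective_lifting_property p LinearMap.id
    (fun x => ⟨1 ⊗ₜ x, by simp [p]⟩)
  have := projective_G_free k H M X
  refine Module.Projective.of_split (Gmap k H M s) (Gmap k H M p) ?_
  refine LinearMap.ext fun t => ?_
  obtain ⟨t, rfl⟩ := (toG k H M X).surjective t
  rw [LinearMap.comp_apply, Gmap_toG, Gmap_toG, LinearMap.id_apply, ← LinearMap.comp_apply,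
    ← LinearMap.lTensor_comp]
  have : p.restrictScalars k ∘ₗ s.restrictScalars k = LinearMap.id := by
    ext x; exact LinearMap.congr_fun hs x
  rw [this, LinearMap.lTensor_id, LinearMap.id_apply]

end G2

lemma Gmap_exact {k : Type u'} [Field k] {H : Type u} [CommRing H] [HopfAlgebra k H]
    (M : Type u) [AddCommGroup M] [Module k M] [Module H M] [IsScalarTower k H M]
    {A B C : Type u} [AddCommGroup A] [AddCommGroup B] [AddCommGroup C]
    [Module k A] [Module k B] [Module k C] [Module H A] [Module H B] [Module H C]
    [IsScalarTower k H A] [IsScalarTower k H B] [IsScalarTower k H C]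
    (f : A →ₗ[H] B) (g : B →ₗ[H] C) (hfg : Function.Exact f g) (hg : Function.Surjective g) :
    Function.Exact (Gmap k H M f) (Gmap k H M g) := by
  have h1 : Function.Exact (f.restrictScalars k) (g.restrictScalars k) := hfg
  have h2 : Function.Surjective (g.restrictScalars k) := hg
  exact lTensor_exact M h1 h2

lemma key {H : Type u} [CommRing H] {A B C : Type u}
    [AddCommGroup A] [AddCommGroup B] [AddCommGroup C]
    [Module H A] [Module H B] [Module H C] (f : A →ₗ[H] B) (g : B →ₗ[H] C)
    (hf : Function.Injective f) (hg : Function.Surjective g) (hfg : Function.Exact f g)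
    (hB : Module.Projective H B) (n : ℕ) :
    HasProjectiveDimensionLT (ModuleCat.of.{u} H C) (n + 2) ↔
    HasProjectiveDimensionLT (ModuleCat.of.{u} H A) (n + 1) := by
  let S : ShortComplex (ModuleCat.{u} H) :=
    ShortComplex.mk (ModuleCat.ofHom f) (ModuleCat.ofHom g)
      (by ext x; exact hfg.apply_apply_eq_zero x)
  have hS : S.ShortExact :=
    { exact := by
        rw [ShortComplex.ShortExact.moduleCat_exact_iff_function_exact]; exact hfg
      mono_f := (ModuleCat.mono_iff_injective _).mpr hf
      epi_g := (ModuleCat.epi_iff_surjective _).mpr hg }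
  have : Projective S.X₂ := (IsProjective.iff_projective B).mp hB
  exact hS.hasProjectiveDimensionLT_X₃_iff n this

lemma step_G {k : Type u'} [Field k] {H : Type u} [CommRing H] [HopfAlgebra k H]
    (M : Type u) [AddCommGroup M] [Module k M] [Module H M] [IsScalarTower k H M]
    {A B C : Type u} [AddCommGroup A] [AddCommGroup B] [AddCommGroup C]
    [Module k A] [Module k B] [Module k C] [Module H A] [Module H B] [Module H C]
    [IsScalarTower k H A] [IsScalarTower k H B] [IsScalarTower k H C]
    (f : A →ₗ[H] B) (g : B →ₗ[H] C) (hf : Function.Injective f) (hg : Function.Surjective g)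
    (hfg : Function.Exact f g) (hB : Module.Projective H B) (n : ℕ)
    (h : HasProjectiveDimensionLT (ModuleCat.of.{u} H (G k H M A)) (n + 1)) :
    HasProjectiveDimensionLT (ModuleCat.of.{u} H (G k H M C)) (n + 2) := by
  refine (key (Gmap k H M f) (Gmap k H M g) ?_ ?_ (Gmap_exact M f g hfg hg)
    (projective_G k H M _) n).mpr h
  · exact Module.Flat.lTensor_preserves_injective_linearMap (M := M) (f.restrictScalars k) hf
  · exact LinearMap.lTensor_surjective M (g := g.restrictScalars k) hg

lemma pd_G {k : Type u'} [Field k] {H : Type u} [CommRing H] [HopfAlgebra k H]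
    (M : Type u) [AddCommGroup M] [Module k M] [Module H M] [IsScalarTower k H M] (n : ℕ) :
    ∀ (X : Type u) [AddCommGroup X] [Module k X] [Module H X] [IsScalarTower k H X],
      HasProjectiveDimensionLT (ModuleCat.of.{u} H X) (n + 1) →
      HasProjectiveDimensionLT (ModuleCat.of.{u} H (G k H M X)) (n + 1) := by
  induction n with
  | zero =>
    intro X _ _ _ _ hX
    have h1 : Projective (ModuleCat.of.{u} H X) :=
      projective_iff_hasProjectiveDimensionLT_one.mpr hX
    have h2 : Module.Projective H X := (IsProjective.iff_projective X).mpr h1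
    have h3 := projective_G k H M X
    exact projective_iff_hasProjectiveDimensionLT_one.mp
      ((IsProjective.iff_projective (G k H M X)).mp h3)
  | succ n ih =>
    intro X _ _ _ _ hX
    let p : (X →₀ H) →ₗ[H] X := Finsupp.linearCombination H id
    have hp : Function.Surjective p := Finsupp.linearCombination_surjective H Function.surjective_id
    let i : LinearMap.ker p →ₗ[H] (X →₀ H) := (LinearMap.ker p).subtype
    have hex : Function.Exact i p := LinearMap.exact_subtype_ker_map p
    have hi : Function.Injective i := Subtype.val_injective
    have hX' : HasProjectiveDimensionLT (ModuleCat.of.{u} H (LinearMap.ker p)) (n + 1) :=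
      (key i p hi hp hex inferInstance n).mp hX
    exact step_G M i p hi hp hex inferInstance n (ih (LinearMap.ker p) hX')

lemma pd_all {k : Type u'} [Field k] {H : Type u} [CommRing H] [HopfAlgebra k H] (n : ℕ)
    (hn : HasProjectiveDimensionLE
      (ModuleCat.of.{u} H (H ⧸ RingHom.ker (Bialgebra.counitAlgHom k H))) n)
    (M : Type u) [AddCommGroup M] [Module H M] :
    HasProjectiveDimensionLT (ModuleCat.of.{u} H M) (n + 1) := by
  let _ : Module k M := Module.compHom M (algebraMap k H)
  have : IsScalarTower k H M := ⟨fun c h x => by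
    rw [Algebra.smul_def, mul_smul]; rfl⟩
  set I := RingHom.ker (Bialgebra.counitAlgHom k H) with hI
  have hG := pd_G (k := k) M n (H ⧸ I) hn
  let ε' : (H ⧸ I) →ₗ[k] k := (Ideal.Quotient.liftₐ I (Bialgebra.counitAlgHom k H)
    (fun a ha => ha)).toLinearMap
  have hε' : ∀ h : H, ε' (Ideal.Quotient.mk I h) = Coalgebra.counit (R := k) h := fun h => rfl
  let r : M ⊗[k] (H ⧸ I) →ₗ[k] M := (TensorProduct.rid k M).toLinearMap ∘ₗ ε'.lTensor M
  have hr : ∀ (w : H ⊗[k] H) (t : M ⊗[k] (H ⧸ I)), r (act k H M _ w t) =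
      (TensorProduct.rid k H ((Coalgebra.counit (R := k) (A := H)).lTensor H w)) • r t := by
    intro w t
    induction w with
    | zero => simp
    | add x y hx hy => simp only [map_add, LinearMap.add_apply, hx, hy, add_smul]
    | tmul a b =>
      induction t with
      | zero => simp
      | add x y hx hy => simp only [map_add, hx, hy, smul_add]
      | tmul m x =>
        obtain ⟨x, rfl⟩ := Ideal.Quotient.mk_surjective x
        have e1 : b • Ideal.Quotient.mk I x = Ideal.Quotient.mk I (b * x) := rfl
        rw [act_tmul, e1]
        simp only [r, LinearMap.comp_apply, LinearMap.lTensor_tmul, hε', LinearEquiv.coe_coe,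
          TensorProduct.rid_tmul, Bialgebra.counit_mul]
        rw [smul_assoc, mul_smul, smul_algebra_smul_comm, smul_algebra_smul_comm _ a,
          smul_comm (Coalgebra.counit (R := k) x)]
  let R : G k H M (H ⧸ I) →ₗ[H] M :=
    { toFun := fun t => r ((toG k H M _).symm t)
      map_add' := fun a b => by simp only [map_add]
      map_smul' := fun h t => by
        obtain ⟨t, rfl⟩ := (toG k H M (H ⧸ I)).surjective t
        rw [smul_toG, LinearEquiv.symm_apply_apply, LinearEquiv.symm_apply_apply, hr,
          Coalgebra.lTensor_counit_comul]
        simp }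
  have hs : ∀ (w : H ⊗[k] H) (m : M),
      act k H M (H ⧸ I) w (m ⊗ₜ 1) =
      ((TensorProduct.rid k H ((Coalgebra.counit (R := k) (A := H)).lTensor H w)) • m) ⊗ₜ 1 := by
    intro w m
    induction w with
    | zero => simp
    | add x y hx hy => simp only [map_add, LinearMap.add_apply, hx, hy, add_smul, add_tmul]
    | tmul a b =>
      have e1 : b • (1 : H ⧸ I) = (Coalgebra.counit (R := k) b) • (1 : H ⧸ I) := by
        have : b - algebraMap k H (Coalgebra.counit (R := k) b) ∈ I := by
          rw [hI, RingHom.mem_ker, map_sub, AlgHom.commutes]; simp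
        have := Ideal.Quotient.eq.mpr this
        rw [Algebra.smul_def, Algebra.smul_def, mul_one, mul_one]
        exact this
      rw [act_tmul, e1]
      simp [tmul_smul, smul_tmul']
  let s : M →ₗ[H] G k H M (H ⧸ I) :=
    { toFun := fun m => toG k H M _ (m ⊗ₜ 1)
      map_add' := fun a b => by simp only [add_tmul, map_add]
      map_smul' := fun h m => by
        rw [RingHom.id_apply, smul_toG, hs, Coalgebra.lTensor_counit_comul]
        simp }
  have hrs : ∀ m, R (s m) = m := by
    intro m
    change r ((toG k H M _).symm (toG k H M _ (m ⊗ₜ 1))) = m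
    rw [LinearEquiv.symm_apply_apply]
    have e1 : ε' 1 = 1 := map_one (Ideal.Quotient.liftₐ I (Bialgebra.counitAlgHom k H)
      (fun a ha => ha))
    simp [r, e1]
  let ret : Retract (ModuleCat.of.{u} H M) (ModuleCat.of.{u} H (G k H M (H ⧸ I))) :=
    { i := ModuleCat.ofHom s
      r := ModuleCat.ofHom R
      retract := by ext m; exact hrs m }
  exact ret.hasProjectiveDimensionLT (n + 1)

end HopfReg

theorem commutative_affine_hopf_algebra_regular
    (k : Type u') [Field k] [IsAlgClosed k] [CharZero k]
    (H : Type u) [CommRing H] [HopfAlgebra k H]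
    (haff : Algebra.FiniteType k H) :
    HasFiniteGlobalDimension H := by
  have : IsNoetherianRing H := Algebra.FiniteType.isNoetherianRing k H
  obtain ⟨n, hn⟩ := HopfReg.pd_residue (k := k) (H := H)
  refine ⟨n, ?_⟩
  intro M N _ _ _ _ i hi
  have h := HopfReg.pd_all n hn (ULift.{u} M)
  exact h.subsingleton _ (n + 1) i hi _
end
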